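/- arXiv:2601.12888 — 6 statements merged into one kernel-verified Lean document; each statement's English description precedes it below -/
import Mathlib

section
/- Let 0 < k < 1 and let α, β, γ be positive real numbers. Define Jacobi parameters a_n := k·√((n+1)(n+α)(n+β)(n+γ)) and b_n := k²(n+α)(n+β) + n(n+γ−1) for n ≥ 0, and define G : ℕ × ℕ → ℝ by G_{m,n} := (−1)^{m+n+1} k^{m+n−2} √((α)_m (α)_n (β)_m (β)_n / (m! n! (γ)_m (γ)_n)) · Σ_{j=n}^{m−1} k^{−2j} · j!(γ)_j / ((α)_{j+1}(β)_{j+1}) for m > n ≥ 0, and G_{m,n} := 0 for m ≤ n. Then G is the Green function of the Jacobi matrix with these parameters, i.e., for all m, n ≥ 0: a_{m−1}·G_{m−1,n} + b_m·G_{m,n} + a_m·G_{m+1,n} = 1 if m = n and = 0 otherwise, where for m = 0 the term a_{m−1}·G_{m−1,n} is absent (taken to be 0). -/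
/-- The Pochhammer symbol `(x)_n = x(x+1)⋯(x+n-1)` for a real `x`. -/
noncomputable def pochR (x : ℝ) (n : ℕ) : ℝ := ∏ i ∈ Finset.range n, (x + (i : ℝ))

/-- The subdiagonal Jacobi parameters `a_n = k √((n+1)(n+α)(n+β)(n+γ))`. -/
noncomputable def jacA (k α β γ : ℝ) (n : ℕ) : ℝ :=
  k * Real.sqrt (((n : ℝ) + 1) * ((n : ℝ) + α) * ((n : ℝ) + β) * ((n : ℝ) + γ))

/-- The diagonal Jacobi parameters `b_n = k²(n+α)(n+β) + n(n+γ-1)`. -/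
noncomputable def jacB (k α β γ : ℝ) (n : ℕ) : ℝ :=
  k ^ 2 * ((n : ℝ) + α) * ((n : ℝ) + β) + (n : ℝ) * ((n : ℝ) + γ - 1)

/-- The claimed Green function: zero for `m ≤ n`, and for `m > n` given by
`(-1)^{m+n+1} k^{m+n-2} √((α)_m(α)_n(β)_m(β)_n/(m! n! (γ)_m(γ)_n)) ·
  Σ_{j=n}^{m-1} k^{-2j} j!(γ)_j/((α)_{j+1}(β)_{j+1})`. -/
noncomputable def greenG (k α β γ : ℝ) (m n : ℕ) : ℝ :=
  if m ≤ n then 0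
  else
    (-1 : ℝ) ^ (m + n + 1) * k ^ ((m : ℤ) + (n : ℤ) - 2) *
      Real.sqrt (pochR α m * pochR α n * pochR β m * pochR β n /
        ((Nat.factorial m : ℝ) * (Nat.factorial n : ℝ) * pochR γ m * pochR γ n)) *
      ∑ j ∈ Finset.Ico n m,
        k ^ (-(2 : ℤ) * (j : ℤ)) * (Nat.factorial j : ℝ) * pochR γ j /
          (pochR α (j + 1) * pochR β (j + 1))

/-!
Let `J` be a tridiagonal matrix and `p` a nowhere vanishing vector with `J p = 0`. Reduction of
order looks for the `n`-th column of the Green function in the form `p · S`: then `J (p · S)` only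
involves the differences of `S`, and `J (p · S) = e_n` is solved by the partial sums of
`p_n / (a_j p_j p_{j+1})` over `j ≥ n`.

For the parameters at hand, `b_n = l_n + μ_n` and `a_n² = l_n μ_{n+1}` with
`l_n = k²(n+α)(n+β)` and `μ_n = n(n+γ-1)`, where `μ_0 = 0`. Hence a solution of the first order
recurrence `a_n p_{n+1} = -l_n p_n` also satisfies `a_n p_n = -μ_{n+1} p_{n+1}`, and adding the two
gives `J p = 0`.
-/

section ReductionOfOrder

/-- The action `u ↦ J u` of the tridiagonal matrix with diagonal `b` and off-diagonals `a`. The case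
distinction stands for the missing entry with index `m - 1` in the row `m = 0`. -/
def jacobiApply {R : Type*} [Semiring R] (a b u : ℕ → R) (m : ℕ) : R :=
  (if m = 0 then 0 else a (m - 1) * u (m - 1)) + b m * u m + a m * u (m + 1)

theorem jacobiApply_mul {R : Type*} [CommRing R] (a b p S : ℕ → R) (m : ℕ) :
    jacobiApply a b (fun i ↦ p i * S i) m =
      jacobiApply a b p m * S m + a m * p (m + 1) * (S (m + 1) - S m) -
        if m = 0 then 0 else a (m - 1) * p (m - 1) * (S m - S (m - 1)) := by
  unfold jacobiApply
  split_ifs <;> ring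

theorem sum_Ico_succ_sub_sum_Ico {M : Type*} [AddCommGroup M] (f : ℕ → M) (n m : ℕ) :
    ∑ j ∈ Finset.Ico n (m + 1), f j - ∑ j ∈ Finset.Ico n m, f j = if n ≤ m then f m else 0 := by
  split_ifs with h
  · rw [Finset.sum_Ico_succ_top h, add_sub_cancel_left]
  · simp [Finset.Ico_eq_empty_of_le, show m + 1 ≤ n by lia, show m ≤ n by lia]

variable {K : Type*} [Field K]

/-- The Green function obtained by reduction of order from a solution `p` of `J p = 0`, where `a` is
the off-diagonal of `J`. It vanishes for `m ≤ n` because the sum is then empty. -/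
def reductionGreen (a p : ℕ → K) (m n : ℕ) : K :=
  p m * p n * ∑ j ∈ Finset.Ico n m, (a j * p j * p (j + 1))⁻¹

theorem jacobiApply_reductionGreen {a b p : ℕ → K} (ha : ∀ j, a j ≠ 0) (hp : ∀ j, p j ≠ 0)
    (hJp : ∀ m, jacobiApply a b p m = 0) (m n : ℕ) :
    jacobiApply a b (fun i ↦ reductionGreen a p i n) m = if m = n then 1 else 0 := by
  set S : ℕ → K := fun i ↦ p n * ∑ j ∈ Finset.Ico n i, (a j * p j * p (j + 1))⁻¹ with hS
  have S_succ_sub (i : ℕ) :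
      S (i + 1) - S i = if n ≤ i then p n * (a i * p i * p (i + 1))⁻¹ else 0 := by
    rw [hS, ← mul_sub, sum_Ico_succ_sub_sum_Ico, mul_ite, mul_zero]
  have casoratian (i : ℕ) :
      a i * p i * p (i + 1) * (S (i + 1) - S i) = if n ≤ i then p n else 0 := by
    rw [S_succ_sub, mul_ite, mul_zero, mul_left_comm, mul_inv_cancel₀, mul_one]
    exact mul_ne_zero (mul_ne_zero (ha i) (hp i)) (hp (i + 1))
  have upper (i : ℕ) : a i * p (i + 1) * (S (i + 1) - S i) = (if n ≤ i then p n else 0) / p i := by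
    rw [eq_div_iff (hp i), ← casoratian]
    ring
  have lower (i : ℕ) : a i * p i * (S (i + 1) - S i) = (if n ≤ i then p n else 0) / p (i + 1) := by
    rw [eq_div_iff (hp (i + 1)), ← casoratian]
    ring
  have factor : (fun i ↦ reductionGreen a p i n) = fun i ↦ p i * S i :=
    funext fun i ↦ mul_assoc _ _ _
  rw [factor, jacobiApply_mul, hJp, upper, zero_mul, zero_add]
  rcases m with _ | l
  · rcases eq_or_ne n 0 with rfl | hn
    · simp [hp]
    · simp [hn, hn.symm]
  · rw [if_neg l.succ_ne_zero, Nat.add_sub_cancel, lower]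
    rcases lt_trichotomy (l + 1) n with h | rfl | h
    · simp [h.ne, show ¬ n ≤ l + 1 by lia, show ¬ n ≤ l by lia]
    · simp [hp]
    · simp [h.ne', h.le, show n ≤ l by lia]

end ReductionOfOrder

theorem sqrt_mul_mul_sqrt_of_mul_eq_mul {x y w w' : ℝ} (hx : 0 ≤ x) (hy : 0 ≤ y)
    (h : y * w' = x * w) : √(x * y) * √w' = x * √w := by
  calc √(x * y) * √w' = √(x * y * w') := (Real.sqrt_mul (mul_nonneg hx hy) _).symm
    _ = √(x ^ 2 * w) := by rw [mul_assoc, h, ← mul_assoc, sq]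
    _ = x * √w := by rw [Real.sqrt_mul (sq_nonneg x), Real.sqrt_sq hx]

theorem pochR_succ (x : ℝ) (n : ℕ) : pochR x (n + 1) = pochR x n * (x + n) :=
  Finset.prod_range_succ _ _

theorem pochR_pos {x : ℝ} (hx : 0 < x) (n : ℕ) : 0 < pochR x n :=
  Finset.prod_pos fun _ _ ↦ by positivity

theorem pochR_mul_pochR_pos {x y : ℝ} (h : ∀ n : ℕ, 0 < (n + x) * (n + y)) (n : ℕ) :
    0 < pochR x n * pochR y n := by
  rw [pochR, pochR, ← Finset.prod_mul_distrib]
  exact Finset.prod_pos fun i _ ↦ by simpa only [add_comm] using h i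

/-- The weight `(α)_n (β)_n / (n! (γ)_n)` of the hypergeometric series `₂F₁(α, β; γ; ·)`. Up to the
factor `k ^ (2 * n)` it is the square of the `n`-th entry of the null vector. -/
noncomputable def hypWeight (α β γ : ℝ) (n : ℕ) : ℝ :=
  pochR α n * pochR β n / (n.factorial * pochR γ n)

/-- The solution `p` of `J p = 0` for the Jacobi matrix `J` with parameters `jacA` and `jacB`, with
`p 0 = 1`. -/
noncomputable def nullVector (k α β γ : ℝ) (n : ℕ) : ℝ :=
  (-k) ^ n * √(hypWeight α β γ n)

section JacobiParameters

variable {k α β γ : ℝ}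

theorem hypWeight_pos (hαβ : ∀ n : ℕ, 0 < (n + α) * (n + β)) (hγ : 0 < γ) (n : ℕ) :
    0 < hypWeight α β γ n :=
  div_pos (pochR_mul_pochR_pos hαβ n) (mul_pos (by positivity) (pochR_pos hγ n))

theorem mul_hypWeight_succ (hγ : 0 < γ) (n : ℕ) :
    (n + 1) * (n + γ) * hypWeight α β γ (n + 1) = (n + α) * (n + β) * hypWeight α β γ n := by
  have := pochR_pos hγ n
  simp only [hypWeight, pochR_succ, Nat.factorial_succ]
  push_cast
  field_simp
  ring

theorem jacA_ne_zero (hk : k ≠ 0) (hαβ : ∀ n : ℕ, 0 < (n + α) * (n + β)) (hγ : 0 < γ) (n : ℕ) :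
    jacA k α β γ n ≠ 0 := by
  have := hαβ n
  rw [jacA, mul_assoc ((n : ℝ) + 1)]
  positivity

theorem nullVector_ne_zero (hk : k ≠ 0) (hαβ : ∀ n : ℕ, 0 < (n + α) * (n + β)) (hγ : 0 < γ)
    (n : ℕ) : nullVector k α β γ n ≠ 0 :=
  mul_ne_zero (pow_ne_zero n (neg_ne_zero.mpr hk)) (Real.sqrt_pos.mpr (hypWeight_pos hαβ hγ n)).ne'

theorem jacA_mul_nullVector_succ (hαβ : ∀ n : ℕ, 0 < (n + α) * (n + β)) (hγ : 0 < γ) (n : ℕ) :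
    jacA k α β γ n * nullVector k α β γ (n + 1) =
      -(k ^ 2 * (n + α) * (n + β)) * nullVector k α β γ n := by
  have hsqrt := sqrt_mul_mul_sqrt_of_mul_eq_mul (hαβ n).le (by positivity)
    (mul_hypWeight_succ (α := α) (β := β) hγ n)
  rw [jacA, show ((n : ℝ) + 1) * (n + α) * (n + β) * (n + γ) =
    (n + α) * (n + β) * ((n + 1) * (n + γ)) by ring]
  unfold nullVector
  linear_combination k * (-k) ^ (n + 1) * hsqrt

theorem jacA_mul_nullVector (hαβ : ∀ n : ℕ, 0 < (n + α) * (n + β)) (hγ : 0 < γ) (n : ℕ) :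
    jacA k α β γ n * nullVector k α β γ n =
      -((n + 1) * (n + γ)) * nullVector k α β γ (n + 1) := by
  have hsqrt := sqrt_mul_mul_sqrt_of_mul_eq_mul (by positivity) (hαβ n).le
    (mul_hypWeight_succ (α := α) (β := β) hγ n).symm
  rw [jacA, show ((n : ℝ) + 1) * (n + α) * (n + β) * (n + γ) =
    (n + 1) * (n + γ) * ((n + α) * (n + β)) by ring]
  unfold nullVector
  linear_combination k * (-k) ^ n * hsqrt

theorem jacobiApply_nullVector (hαβ : ∀ n : ℕ, 0 < (n + α) * (n + β)) (hγ : 0 < γ) (m : ℕ) :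
    jacobiApply (jacA k α β γ) (jacB k α β γ) (nullVector k α β γ) m = 0 := by
  rcases m with _ | l
  · simp only [jacobiApply, if_true, jacA_mul_nullVector_succ hαβ hγ, jacB]
    push_cast
    ring
  · simp only [jacobiApply, if_neg l.succ_ne_zero, Nat.add_sub_cancel,
      jacA_mul_nullVector hαβ hγ, jacA_mul_nullVector_succ hαβ hγ, jacB]
    push_cast
    ring

theorem nullVector_sq (hαβ : ∀ n : ℕ, 0 < (n + α) * (n + β)) (hγ : 0 < γ) (n : ℕ) :
    nullVector k α β γ n ^ 2 = k ^ (2 * n) * hypWeight α β γ n := by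
  rw [nullVector, mul_pow, Real.sq_sqrt (hypWeight_pos hαβ hγ n).le, ← pow_mul, mul_comm n,
    (even_two_mul n).neg_pow]

theorem inv_jacA_mul_nullVector_mul_nullVector_succ (hαβ : ∀ n : ℕ, 0 < (n + α) * (n + β))
    (hγ : 0 < γ) (j : ℕ) :
    (jacA k α β γ j * nullVector k α β γ j * nullVector k α β γ (j + 1))⁻¹ =
      -(k ^ 2)⁻¹ * (k ^ (-(2 : ℤ) * (j : ℤ)) * j.factorial * pochR γ j /
        (pochR α (j + 1) * pochR β (j + 1))) := by
  have hzpow : k ^ (-(2 : ℤ) * (j : ℤ)) = (k ^ (2 * j))⁻¹ := by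
    rw [neg_mul, zpow_neg]
    norm_cast
  have hprod : jacA k α β γ j * nullVector k α β γ j * nullVector k α β γ (j + 1) =
      -(k ^ 2 * (j + α) * (j + β)) * (k ^ (2 * j) * hypWeight α β γ j) := by
    rw [← nullVector_sq hαβ hγ]
    linear_combination nullVector k α β γ j * jacA_mul_nullVector_succ (k := k) hαβ hγ j
  rw [hprod, hzpow, hypWeight, pochR_succ, pochR_succ, add_comm α, add_comm β]
  simp only [mul_inv, inv_inv, inv_neg, div_eq_mul_inv]
  ring

theorem nullVector_mul_nullVector (hαβ : ∀ n : ℕ, 0 < (n + α) * (n + β)) (hγ : 0 < γ) (m n : ℕ) :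
    nullVector k α β γ m * nullVector k α β γ n =
      (-1) ^ (m + n) * k ^ (m + n) *
        √(pochR α m * pochR α n * pochR β m * pochR β n /
          (m.factorial * n.factorial * pochR γ m * pochR γ n)) := by
  have hweight : pochR α m * pochR α n * pochR β m * pochR β n /
      (m.factorial * n.factorial * pochR γ m * pochR γ n) =
        hypWeight α β γ m * hypWeight α β γ n := by
    rw [hypWeight, hypWeight, div_mul_div_comm]
    congr 1 <;> ring
  rw [hweight, Real.sqrt_mul (hypWeight_pos hαβ hγ m).le, ← neg_pow, nullVector, nullVector]
  ring

theorem greenG_eq_reductionGreen (hk : k ≠ 0) (hαβ : ∀ n : ℕ, 0 < (n + α) * (n + β)) (hγ : 0 < γ)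
    (m n : ℕ) :
    greenG k α β γ m n = reductionGreen (jacA k α β γ) (nullVector k α β γ) m n := by
  unfold greenG reductionGreen
  split_ifs with h
  · rw [Finset.Ico_eq_empty_of_le h, Finset.sum_empty, mul_zero]
  · have hzpow : k ^ ((m : ℤ) + (n : ℤ) - 2) = k ^ (m + n) * (k ^ 2)⁻¹ := by
      rw [zpow_sub₀ hk, div_eq_mul_inv]
      norm_cast
    simp only [inv_jacA_mul_nullVector_mul_nullVector_succ hαβ hγ, ← Finset.mul_sum]
    rw [nullVector_mul_nullVector hαβ hγ, hzpow]
    ring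

/-- The condition on `α` and `β` says that both are positive or that both lie in the same interval
`(-(j + 1), -j)` with `j : ℕ`. -/
theorem greenG_is_green_function_general (hk : k ≠ 0) (hαβ : ∀ n : ℕ, 0 < (n + α) * (n + β))
    (hγ : 0 < γ) (m n : ℕ) :
    (if m = 0 then 0 else jacA k α β γ (m - 1) * greenG k α β γ (m - 1) n) +
        jacB k α β γ m * greenG k α β γ m n +
        jacA k α β γ m * greenG k α β γ (m + 1) n =
      if m = n then 1 else 0 := by
  simp only [greenG_eq_reductionGreen hk hαβ hγ]
  exact jacobiApply_reductionGreen (jacA_ne_zero hk hαβ hγ) (nullVector_ne_zero hk hαβ hγ)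
    (jacobiApply_nullVector hαβ hγ) m n

end JacobiParameters

/-- The matrix `greenG` is the Green function of the Jacobi matrix with parameters
`jacA`, `jacB`, i.e. `J G = I` entrywise (the term with index `m - 1` is absent
when `m = 0`). -/
theorem greenG_is_green_function (k α β γ : ℝ) (hk0 : 0 < k) (hk1 : k < 1)
    (hα : 0 < α) (hβ : 0 < β) (hγ : 0 < γ) :
    ∀ m n : ℕ,
      (if m = 0 then 0 else jacA k α β γ (m - 1) * greenG k α β γ (m - 1) n) +
        jacB k α β γ m * greenG k α β γ m n +
        jacA k α β γ m * greenG k α β γ (m + 1) n =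
      if m = n then 1 else 0 :=
  greenG_is_green_function_general hk0.ne' (fun n ↦ by positivity) hγ
end

section
/- Let a_n > 0 and b_n, d_n be real sequences. Let G be strictly lower triangular (G_{m,n} = 0 for m ≤ n) with a_{m−1}G_{m−1,n} + b_m G_{m,n} + a_m G_{m+1,n} = δ_{m,n} for all m, n (first term absent for m = 0), and let Ǧ be strictly lower triangular with a_{m−1}Ǧ_{m−1,n} + (b_m + d_m)Ǧ_{m,n} + a_m Ǧ_{m+1,n} = δ_{m,n} for all m, n (first term absent for m = 0). Then (I + GD)Ǧ = G, i.e., for all m, n ≥ 0: Ǧ_{m,n} + Σ_{j=n+1}^{m−1} G_{m,j} · d_j · Ǧ_{j,n} = G_{m,n}. -/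
/-!
`G` solves initial value problems: for any `f`, the sequence `m ↦ ∑ j < m, G m j • f j` is a
solution of `J u = f`, `u 0 = 0`. It is the only one, because row `m` of `J u = f` determines
`u (m + 1)` from `u 0, …, u m`. Hence `G (J u) = u` whenever `u 0 = 0`, although `J` need not act
injectively on all sequences. The columns of `Ǧ` vanish at `0`, so multiplying `J Ǧ + D Ǧ = I` by
`G` on the left gives `Ǧ + G D Ǧ = G`.
-/

section Hessenberg

variable {R M : Type*} [Semiring R] [AddCommMonoid M] [Module R M]

/-- The product of an infinite lower Hessenberg matrix with a sequence. The Hessenberg condition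
`H m j = 0` for `m + 1 < j` is built in: those entries are never read. -/
def hessenbergMulVec (H : Matrix ℕ ℕ R) (u : ℕ → M) (m : ℕ) : M :=
  ∑ j ∈ Finset.range (m + 2), H m j • u j

theorem hessenbergMulVec_add_diagonal (H : Matrix ℕ ℕ R) (d : ℕ → R) (u : ℕ → M) (m : ℕ) :
    hessenbergMulVec (H + Matrix.diagonal d) u m = hessenbergMulVec H u m + d m • u m := by
  simp [hessenbergMulVec, add_smul, Finset.sum_add_distrib, Matrix.diagonal_apply, ite_smul]

theorem eq_of_hessenbergMulVec_eq [IsCancelAdd M] {H : Matrix ℕ ℕ R}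
    (hH : ∀ m, IsSMulRegular M (H m (m + 1))) {u v : ℕ → M} (h_zero : u 0 = v 0)
    (h : hessenbergMulVec H u = hessenbergMulVec H v) : u = v := by
  funext m
  induction m using Nat.strong_induction_on with
  | _ m ih =>
    cases m with
    | zero => exact h_zero
    | succ m =>
      have h_lower : ∑ j ∈ Finset.range (m + 1), H m j • u j =
          ∑ j ∈ Finset.range (m + 1), H m j • v j :=
        Finset.sum_congr rfl fun j hj => by rw [ih j (Finset.mem_range.1 hj)]
      have h_row := congrFun h m
      rw [hessenbergMulVec, hessenbergMulVec, Finset.sum_range_succ,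
        Finset.sum_range_succ _ (m + 1), h_lower] at h_row
      exact hH m (add_left_cancel h_row)

/-- `G` is the Green function of the lower Hessenberg matrix `H`: the strictly lower triangular
solution of `H G = I`. -/
structure IsGreenFunction (H G : Matrix ℕ ℕ R) : Prop where
  eq_zero_of_le : ∀ m n, m ≤ n → G m n = 0
  hessenbergMulVec_col : ∀ m n, hessenbergMulVec H (G.col n) m = (1 : Matrix ℕ ℕ R) m n

namespace IsGreenFunction

variable {H G : Matrix ℕ ℕ R}

theorem sum_range_smul_of_le (hG : IsGreenFunction H G) (f : ℕ → M) {m N : ℕ} (hmN : m ≤ N) :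
    ∑ j ∈ Finset.range m, G m j • f j = ∑ j ∈ Finset.range N, G m j • f j :=
  Finset.sum_subset (Finset.range_subset_range.2 hmN) fun j _ hj => by
    rw [hG.eq_zero_of_le m j (by simpa using hj), zero_smul]

theorem hessenbergMulVec_sum_range_smul (hG : IsGreenFunction H G) (f : ℕ → M) :
    hessenbergMulVec H (fun m => ∑ j ∈ Finset.range m, G m j • f j) = f := by
  funext m
  calc ∑ k ∈ Finset.range (m + 2), H m k • ∑ j ∈ Finset.range k, G k j • f j
      = ∑ k ∈ Finset.range (m + 2), H m k • ∑ j ∈ Finset.range (m + 2), G k j • f j :=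
        Finset.sum_congr rfl fun k hk => by
          rw [hG.sum_range_smul_of_le f (Finset.mem_range.1 hk).le]
    _ = ∑ j ∈ Finset.range (m + 2), hessenbergMulVec H (G.col j) m • f j := by
        simp only [hessenbergMulVec, Matrix.col_apply, Finset.smul_sum, Finset.sum_smul,
          smul_smul, smul_eq_mul]
        exact Finset.sum_comm
    _ = f m := by
        simp [hG.hessenbergMulVec_col, Matrix.one_apply, ite_smul]

theorem sum_range_smul_hessenbergMulVec [IsCancelAdd M] (hG : IsGreenFunction H G)
    (hH : ∀ m, IsSMulRegular M (H m (m + 1))) {u : ℕ → M} (hu : u 0 = 0) (m : ℕ) :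
    ∑ j ∈ Finset.range m, G m j • hessenbergMulVec H u j = u m :=
  congrFun (eq_of_hessenbergMulVec_eq hH (by simp [hu])
    (hG.hessenbergMulVec_sum_range_smul (hessenbergMulVec H u))) m

theorem sum_range_mul_one_apply (hG : IsGreenFunction H G) (m n : ℕ) :
    ∑ j ∈ Finset.range m, G m j * (1 : Matrix ℕ ℕ R) j n = G m n := by
  simpa [Matrix.one_apply] using fun hmn => (hG.eq_zero_of_le m n hmn).symm

theorem sum_Ioo_mul (hG : IsGreenFunction H G) (f : ℕ → R) (m n : ℕ) :
    ∑ j ∈ Finset.Ioo n m, f j * G j n = ∑ j ∈ Finset.range m, f j * G j n :=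
  Finset.sum_subset (fun j hj => Finset.mem_range.2 (Finset.mem_Ioo.1 hj).2) fun j hjm hj => by
    have hjn : j ≤ n := by
      simp only [Finset.mem_range, Finset.mem_Ioo] at hjm hj
      omega
    rw [hG.eq_zero_of_le j n hjn, mul_zero]

end IsGreenFunction

theorem perturbed_green_relation_general [IsCancelAdd R] {H G Gc : Matrix ℕ ℕ R} {d : ℕ → R}
    (hH : ∀ m, IsLeftRegular (H m (m + 1))) (hG : IsGreenFunction H G)
    (hGc : IsGreenFunction (H + Matrix.diagonal d) Gc) (m n : ℕ) :
    Gc m n + ∑ j ∈ Finset.Ioo n m, G m j * d j * Gc j n = G m n := by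
  have h_row (j : ℕ) :
      hessenbergMulVec H (Gc.col n) j + d j * Gc j n = (1 : Matrix ℕ ℕ R) j n := by
    rw [← hGc.hessenbergMulVec_col, hessenbergMulVec_add_diagonal, Matrix.col_apply, smul_eq_mul]
  have h_col : ∑ j ∈ Finset.range m, G m j * hessenbergMulVec H (Gc.col n) j = Gc m n :=
    hG.sum_range_smul_hessenbergMulVec hH (hGc.eq_zero_of_le 0 n n.zero_le) m
  calc Gc m n + ∑ j ∈ Finset.Ioo n m, G m j * d j * Gc j n
      = ∑ j ∈ Finset.range m, G m j * (hessenbergMulVec H (Gc.col n) j + d j * Gc j n) := by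
        rw [hGc.sum_Ioo_mul]
        simp only [mul_add, Finset.sum_add_distrib, h_col, mul_assoc]
    _ = ∑ j ∈ Finset.range m, G m j * (1 : Matrix ℕ ℕ R) j n := by simp only [h_row]
    _ = G m n := hG.sum_range_mul_one_apply m n

end Hessenberg

section Jacobi

variable {R M : Type*} [Semiring R] [AddCommMonoid M] [Module R M]

/-- The Jacobi matrix with diagonal `b` and off-diagonals `a`, where `a n` stands in the positions
`(n, n + 1)` and `(n + 1, n)`. -/
def jacobiMatrix (a b : ℕ → R) : Matrix ℕ ℕ R := fun m n =>
  if m = n then b m else if n = m + 1 then a m else if m = n + 1 then a n else 0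

theorem jacobiMatrix_apply_succ (a b : ℕ → R) (m : ℕ) : jacobiMatrix a b m (m + 1) = a m := by
  simp [jacobiMatrix]

theorem jacobiMatrix_add_diagonal (a b d : ℕ → R) :
    jacobiMatrix a b + Matrix.diagonal d = jacobiMatrix a (b + d) := by
  ext m n
  by_cases hmn : m = n <;> simp [jacobiMatrix, hmn]

theorem hessenbergMulVec_jacobiMatrix (a b : ℕ → R) (u : ℕ → M) (m : ℕ) :
    hessenbergMulVec (jacobiMatrix a b) u m =
      (if m = 0 then 0 else a (m - 1) • u (m - 1)) + b m • u m + a m • u (m + 1) := by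
  cases m with
  | zero => simp [hessenbergMulVec, jacobiMatrix, Finset.sum_range_succ]
  | succ m =>
    have h_far : ∑ j ∈ Finset.range m, jacobiMatrix a b (m + 1) j • u j = 0 :=
      Finset.sum_eq_zero fun j hj => by
        have hjm := Finset.mem_range.1 hj
        rw [jacobiMatrix, if_neg (by omega), if_neg (by omega), if_neg (by omega), zero_smul]
    rw [hessenbergMulVec, Finset.sum_range_succ, Finset.sum_range_succ, Finset.sum_range_succ,
      h_far]
    simp [jacobiMatrix, show m ≠ m + 1 + 1 by omega]

theorem isGreenFunction_jacobiMatrix {a b : ℕ → R} {G : ℕ → ℕ → R}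
    (h_tri : ∀ m n, m ≤ n → G m n = 0)
    (h_rec : ∀ m n : ℕ, (if m = 0 then 0 else a (m - 1) * G (m - 1) n) + b m * G m n +
      a m * G (m + 1) n = if m = n then 1 else 0) :
    IsGreenFunction (jacobiMatrix a b) G where
  eq_zero_of_le := h_tri
  hessenbergMulVec_col m n := by
    rw [hessenbergMulVec_jacobiMatrix, Matrix.one_apply]
    exact h_rec m n

end Jacobi

/-- For a diagonal perturbation `J̌ = J + D` of a Jacobi matrix `J` (with `D = diag(d_n)`),
the Green functions satisfy `(I + G D) Ǧ = G`, i.e. entrywise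
`Ǧ_{m,n} + Σ_{j=n+1}^{m-1} G_{m,j} d_j Ǧ_{j,n} = G_{m,n}`. -/
theorem perturbed_green_relation
    (a b d : ℕ → ℝ) (ha : ∀ n, 0 < a n)
    (G Gc : ℕ → ℕ → ℝ)
    (hGtri : ∀ m n, m ≤ n → G m n = 0)
    (hGctri : ∀ m n, m ≤ n → Gc m n = 0)
    (hG : ∀ m n : ℕ,
      (if m = 0 then 0 else a (m - 1) * G (m - 1) n) + b m * G m n +
        a m * G (m + 1) n = if m = n then 1 else 0)
    (hGc : ∀ m n : ℕ,
      (if m = 0 then 0 else a (m - 1) * Gc (m - 1) n) + (b m + d m) * Gc m n +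
        a m * Gc (m + 1) n = if m = n then 1 else 0) :
    ∀ m n : ℕ, Gc m n + ∑ j ∈ Finset.Ioo n m, G m j * d j * Gc j n = G m n := by
  exact perturbed_green_relation_general
    (fun m => jacobiMatrix_apply_succ a b m ▸ (IsRegular.of_ne_zero (ha m).ne').left)
    (isGreenFunction_jacobiMatrix hGtri hG)
    (jacobiMatrix_add_diagonal a b d ▸ isGreenFunction_jacobiMatrix hGctri hGc)
end

section
/- Let a_n > 0 and b_n, d_n be real sequences. Let G be strictly lower triangular (G_{m,n} = 0 for m ≤ n) with a_{m−1}G_{m−1,n} + b_m G_{m,n} + a_m G_{m+1,n} = δ_{m,n} for all m, n (first term absent for m = 0). Let {P_n} be the polynomial sequence determined by P_{−1}(x) = 0, P_0(x) = 1, a_{n−1}P_{n−1}(x) + (b_n − x)P_n(x) + a_n P_{n+1}(x) = 0 for n ≥ 0, and let {P̌_n} be determined by P̌_{−1}(x) = 0, P̌_0(x) = 1, a_{n−1}P̌_{n−1}(x) + (b_n + d_n − x)P̌_n(x) + a_n P̌_{n+1}(x) = 0 for n ≥ 0. Then for every real x and every n ≥ 0: P̌_n(x) = P_n(0) + Σ_{j=0}^{n−1}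 G_{n,j} · (x − d_j) · P̌_j(x). -/
/-!
A sequence `f` is determined by `f 0` and `J f`, because the superdiagonal of `J` is invertible:
its inverses are the entries of `G` just below the diagonal. If `J p = 0` and `p 0 = f 0`, then `f`
and `p + G (J f)` have the same initial value and the same image under `J`, so they agree. The
theorem is the case `p = P(0)` and `f = P̌(x)`, where `J P̌(x) = (x I - D) P̌(x)`.
-/

section TridiagonalOp

variable {R : Type*} [CommRing R]

/-- The tridiagonal matrix with subdiagonal `c`, diagonal `b` and superdiagonal `a`, acting on
sequences: its entries are `c n` at `(n + 1, n)`, `b n` at `(n, n)` and `a n` at `(n, n + 1)`.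
A Jacobi matrix is the case `c = a`. -/
def tridiagonalOp (c b a : ℕ → R) : (ℕ → R) →ₗ[R] (ℕ → R) where
  toFun f n := (if n = 0 then 0 else c (n - 1) * f (n - 1)) + b n * f n + a n * f (n + 1)
  map_add' f g := by
    ext n
    simp only [Pi.add_apply]
    split_ifs <;> ring
  map_smul' r f := by
    ext n
    simp only [Pi.smul_apply, smul_eq_mul, RingHom.id_apply]
    split_ifs <;> ring

variable {c b a : ℕ → R}

theorem tridiagonalOp_apply (f : ℕ → R) (n : ℕ) :
    tridiagonalOp c b a f n =
      (if n = 0 then 0 else c (n - 1) * f (n - 1)) + b n * f n + a n * f (n + 1) :=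
  rfl

theorem tridiagonalOp_apply_congr {f g : ℕ → R} {n : ℕ} (h : ∀ k ≤ n + 1, f k = g k) :
    tridiagonalOp c b a f n = tridiagonalOp c b a g n := by
  simp only [tridiagonalOp_apply, h (n - 1) (by lia), h n n.le_succ, h (n + 1) le_rfl]

theorem tridiagonalOp_add_diagonal (d f : ℕ → R) :
    tridiagonalOp c (b + d) a f = tridiagonalOp c b a f + d * f := by
  ext n
  simp only [tridiagonalOp_apply, Pi.add_apply, Pi.mul_apply]
  ring

theorem eq_of_tridiagonalOp_eq (ha : ∀ n, IsLeftRegular (a n)) {f g : ℕ → R} (h0 : f 0 = g 0)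
    (h : tridiagonalOp c b a f = tridiagonalOp c b a g) : f = g := by
  ext n
  induction n using Nat.strong_induction_on with
  | _ n ih =>
    cases n with
    | zero => exact h0
    | succ n =>
      have row := congrFun h n
      simp only [tridiagonalOp_apply, ih (n - 1) (by lia), ih n n.lt_succ_self] at row
      exact ha n (add_left_cancel row)

end TridiagonalOp

section GreenFunction

variable {R : Type*} [CommRing R]

/-- The Green function of the tridiagonal matrix `T = tridiagonalOp c b a`: the strictly lower
triangular solution of `T G = I`. The matrix equation is stated for each column of `G`. -/
structure IsGreenFunction_s4 (c b a : ℕ → R) (G : ℕ → ℕ → R) : Prop where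
  eq_zero_of_le : ∀ m n, m ≤ n → G m n = 0
  tridiagonalOp_column : ∀ n, tridiagonalOp c b a (fun m ↦ G m n) = Pi.single n 1

/-- The product of a strictly lower triangular matrix `G` with the sequence `u`; the
entries of `G` on or above the diagonal are ignored. -/
def strictLowerMulVec (G : ℕ → ℕ → R) (u : ℕ → R) (n : ℕ) : R :=
  ∑ j ∈ Finset.range n, G n j * u j

namespace IsGreenFunction_s4

variable {c b a : ℕ → R} {G : ℕ → ℕ → R}

theorem superdiagonal_mul (hG : IsGreenFunction_s4 c b a G) (n : ℕ) : a n * G (n + 1) n = 1 := by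
  simpa [tridiagonalOp_apply, hG.eq_zero_of_le (n - 1) n (by lia), hG.eq_zero_of_le n n le_rfl]
    using congrFun (hG.tridiagonalOp_column n) n

theorem isLeftRegular_superdiagonal (hG : IsGreenFunction_s4 c b a G) (n : ℕ) :
    IsLeftRegular (a n) :=
  (IsUnit.of_mul_eq_one _ (hG.superdiagonal_mul n)).isRegular.left

theorem strictLowerMulVec_eq_sum_range (hG : IsGreenFunction_s4 c b a G) (u : ℕ → R) {n N : ℕ}
    (hn : n ≤ N) : strictLowerMulVec G u n = ∑ j ∈ Finset.range N, G n j * u j := by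
  refine Finset.sum_subset (Finset.range_mono hn) fun j _ hj ↦ ?_
  rw [hG.eq_zero_of_le n j (by simpa using hj), zero_mul]

theorem tridiagonalOp_strictLowerMulVec (hG : IsGreenFunction_s4 c b a G) (u : ℕ → R) :
    tridiagonalOp c b a (strictLowerMulVec G u) = u := by
  ext n
  have eq_columns : ∀ k ≤ n + 1, strictLowerMulVec G u k =
      (∑ j ∈ Finset.range (n + 1), u j • fun m ↦ G m j) k := fun k hk ↦ by
    simp [hG.strictLowerMulVec_eq_sum_range u hk, mul_comm]
  calc tridiagonalOp c b a (strictLowerMulVec G u) n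
      = tridiagonalOp c b a (∑ j ∈ Finset.range (n + 1), u j • fun m ↦ G m j) n :=
        tridiagonalOp_apply_congr eq_columns
    _ = (∑ j ∈ Finset.range (n + 1), u j • Pi.single j (1 : R)) n := by
        simp only [map_sum, map_smul, hG.tridiagonalOp_column]
    _ = u n := by simp [Pi.single_apply]

theorem eq_add_strictLowerMulVec (hG : IsGreenFunction_s4 c b a G) {p f : ℕ → R} (h0 : f 0 = p 0)
    (hp : tridiagonalOp c b a p = 0) :
    f = p + strictLowerMulVec G (tridiagonalOp c b a f) := by
  apply eq_of_tridiagonalOp_eq hG.isLeftRegular_superdiagonal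
  · simp [strictLowerMulVec, h0]
  · rw [map_add, hp, zero_add, hG.tridiagonalOp_strictLowerMulVec]

end IsGreenFunction_s4

end GreenFunction

theorem perturbed_polynomials_from_green_general {R : Type*} [CommRing R] {c b a d : ℕ → R}
    {G : ℕ → ℕ → R} (hG : IsGreenFunction_s4 c b a G) {p q : ℕ → R} {x : R} (h0 : q 0 = p 0)
    (hp : tridiagonalOp c b a p = 0) (hq : tridiagonalOp c (b + d) a q = x • q) (n : ℕ) :
    q n = p n + ∑ j ∈ Finset.range n, G n j * (x - d j) * q j := by
  have image_q : tridiagonalOp c b a q = fun j ↦ (x - d j) * q j := by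
    rw [tridiagonalOp_add_diagonal, ← eq_sub_iff_add_eq] at hq
    ext j
    simp [hq, sub_mul]
  simpa [image_q, strictLowerMulVec, mul_assoc] using
    congrFun (hG.eq_add_strictLowerMulVec h0 hp) n

/-- For a diagonal perturbation `J̌ = J + D` of a Jacobi matrix `J` with Green function `G`,
the orthonormal polynomial sequences `P` (for `J`) and `P̌` (for `J̌`) satisfy
`P̌_n(x) = P_n(0) + Σ_{j=0}^{n-1} G_{n,j} (x - d_j) P̌_j(x)`, i.e.
`P̌(x) = (I - G(xI - D))⁻¹ P(0)`. -/
theorem perturbed_polynomials_from_green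
    (a b d : ℕ → ℝ) (ha : ∀ n, 0 < a n)
    (G : ℕ → ℕ → ℝ)
    (hGtri : ∀ m n, m ≤ n → G m n = 0)
    (hG : ∀ m n : ℕ,
      (if m = 0 then 0 else a (m - 1) * G (m - 1) n) + b m * G m n +
        a m * G (m + 1) n = if m = n then 1 else 0)
    (P Pc : ℕ → ℝ → ℝ)
    (hP0 : ∀ x, P 0 x = 1)
    (hPrec : ∀ n : ℕ, ∀ x : ℝ,
      (if n = 0 then 0 else a (n - 1) * P (n - 1) x) + (b n - x) * P n x +
        a n * P (n + 1) x = 0)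
    (hPc0 : ∀ x, Pc 0 x = 1)
    (hPcrec : ∀ n : ℕ, ∀ x : ℝ,
      (if n = 0 then 0 else a (n - 1) * Pc (n - 1) x) + (b n + d n - x) * Pc n x +
        a n * Pc (n + 1) x = 0) :
    ∀ x : ℝ, ∀ n : ℕ,
      Pc n x = P n 0 + ∑ j ∈ Finset.range n, G n j * (x - d j) * Pc j x := by
  have green : IsGreenFunction_s4 a b a G :=
    ⟨hGtri, fun n ↦ funext fun m ↦ by simpa [tridiagonalOp_apply, Pi.single_apply] using hG m n⟩
  intro x n
  have hP : tridiagonalOp a b a (P · 0) = 0 := by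
    ext m
    simpa [tridiagonalOp_apply] using hPrec m 0
  have hPc : tridiagonalOp a (b + d) a (Pc · x) = x • (Pc · x) := by
    ext m
    simp only [tridiagonalOp_apply, Pi.add_apply, Pi.smul_apply, smul_eq_mul]
    linear_combination hPcrec m x
  exact perturbed_polynomials_from_green_general green ((hPc0 x).trans (hP0 0).symm) hP hPc n
end

section
/- Let a_n > 0 and b_n, d_n be real sequences. Let G be strictly lower triangular (G_{m,n} = 0 for m ≤ n) with a_{m−1}G_{m−1,n} + b_m G_{m,n} + a_m G_{m+1,n} = δ_{m,n} for all m, n (first term absent for m = 0). Let {P_n} be the polynomial sequence determined by P_{−1}(x) = 0, P_0(x) = 1, a_{n−1}P_{n−1}(x) + (b_n − x)P_n(x) + a_n P_{n+1}(x) = 0, and {P̌_n} the sequence determined the same way with b_n replaced by b_n + d_n. Then for every n ≥ 0: P̌_n(0) + Σ_{j=0}^{n−1} G_{n,j} · d_j · P̌_j(0) = P_n(0), i.e., P̌(0) = (I + GD)^{−1} P(0). -/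
/-!
Since `JG = I`, applying `J` to `v + GDv` gives `Jv + Dv = J̌v`. Hence if `J̌v = Ju`, the sequences
`v + GDv` and `u` have the same image under `J`. They also have the same zeroth term, because `G` is
strictly lower triangular, and a sequence is recovered from its zeroth term and its image under `J`
by solving the three-term recurrence forward, as long as the superdiagonal entries can be cancelled.
For `u = P(0)` and `v = P̌(0)` one has `J̌v = Ju = 0`.
-/

section Tridiagonal

variable {R M : Type*} [Ring R] [AddCommGroup M] [Module R M] {c b a : ℕ → R}

/-- The semi-infinite tridiagonal matrix with entries `c n`, `b n`, `a n` in positions `(n + 1, n)`,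
`(n, n)`, `(n, n + 1)`, acting on sequences in a module. A Jacobi matrix is the case `c = a`. -/
def tridiag (c b a : ℕ → R) (u : ℕ → M) (m : ℕ) : M :=
  (if m = 0 then 0 else c (m - 1) • u (m - 1)) + b m • u m + a m • u (m + 1)

/-- The Green function of a tridiagonal matrix: its strictly lower triangular right inverse. -/
structure IsGreenFunction_s5 (c b a : ℕ → R) (G : ℕ → ℕ → R) : Prop where
  eq_zero_of_le : ∀ m n, m ≤ n → G m n = 0
  tridiag_col : ∀ m n, tridiag c b a (fun k ↦ G k n) m = if m = n then 1 else 0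

theorem tridiag_congr {u v : ℕ → M} {m : ℕ} (h : ∀ k ≤ m + 1, u k = v k) :
    tridiag c b a u m = tridiag c b a v m := by
  simp only [tridiag, h (m - 1) (by lia), h m (by lia), h (m + 1) le_rfl]

theorem tridiag_add (u v : ℕ → M) (m : ℕ) :
    tridiag c b a (fun k ↦ u k + v k) m = tridiag c b a u m + tridiag c b a v m := by
  unfold tridiag
  split_ifs <;> simp only [smul_add] <;> abel

theorem tridiag_add_diag (d : ℕ → R) (u : ℕ → M) (m : ℕ) :
    tridiag c (b + d) a u m = tridiag c b a u m + d m • u m := by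
  simp only [tridiag, Pi.add_apply, add_smul]
  abel

theorem tridiag_sum_smul (s : Finset ℕ) (K : ℕ → ℕ → R) (f : ℕ → M) (m : ℕ) :
    tridiag c b a (fun k ↦ ∑ j ∈ s, K k j • f j) m =
      ∑ j ∈ s, tridiag c b a (fun k ↦ K k j) m • f j := by
  unfold tridiag
  split_ifs <;>
    simp only [Finset.smul_sum, smul_smul, smul_eq_mul, add_smul, zero_smul,
      Finset.sum_add_distrib, Finset.sum_const_zero]

theorem eq_of_tridiag_eq (ha : ∀ n, IsSMulRegular M (a n)) {u v : ℕ → M} (h₀ : u 0 = v 0)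
    (h : ∀ m, tridiag c b a u m = tridiag c b a v m) (n : ℕ) : u n = v n := by
  induction n using Nat.strong_induction_on with
  | h n ih =>
    cases n with
    | zero => exact h₀
    | succ n =>
      have hn := h n
      simp only [tridiag, ih n n.lt_succ_self, ih (n - 1) (by lia)] at hn
      exact ha n (add_left_cancel hn)

namespace IsGreenFunction_s5

variable {G : ℕ → ℕ → R}

theorem sum_range_of_le (hG : IsGreenFunction_s5 c b a G) (f : ℕ → M) {m N : ℕ} (hmN : m ≤ N) :
    ∑ j ∈ Finset.range m, G m j • f j = ∑ j ∈ Finset.range N, G m j • f j := by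
  refine Finset.sum_subset (Finset.range_subset_range.2 hmN) fun j _ hj ↦ ?_
  rw [hG.eq_zero_of_le m j (by simpa using hj), zero_smul]

theorem tridiag_sum_range (hG : IsGreenFunction_s5 c b a G) (f : ℕ → M) (m : ℕ) :
    tridiag c b a (fun k ↦ ∑ j ∈ Finset.range k, G k j • f j) m = f m := by
  calc
    _ = tridiag c b a (fun k ↦ ∑ j ∈ Finset.range (m + 1), G k j • f j) m :=
      tridiag_congr fun _ hk ↦ hG.sum_range_of_le f hk
    _ = ∑ j ∈ Finset.range (m + 1), (if m = j then (1 : R) else 0) • f j := by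
      simp only [tridiag_sum_smul, hG.tridiag_col]
    _ = f m := by simp

end IsGreenFunction_s5

theorem perturbed_polynomials_at_zero_general {d : ℕ → R} {G : ℕ → ℕ → R} {u v : ℕ → M}
    (ha : ∀ n, IsSMulRegular M (a n)) (hG : IsGreenFunction_s5 c b a G) (h₀ : v 0 = u 0)
    (h : ∀ m, tridiag c (b + d) a v m = tridiag c b a u m) (n : ℕ) :
    v n + ∑ j ∈ Finset.range n, (G n j * d j) • v j = u n := by
  simp only [mul_smul]
  refine eq_of_tridiag_eq (c := c) (b := b) ha
    (u := fun k ↦ v k + ∑ j ∈ Finset.range k, G k j • d j • v j) (by simpa using h₀) (fun m ↦ ?_) n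
  calc
    _ = tridiag c b a v m + d m • v m := by
      rw [tridiag_add, hG.tridiag_sum_range fun j ↦ d j • v j]
    _ = tridiag c (b + d) a v m := (tridiag_add_diag d v m).symm
    _ = tridiag c b a u m := h m

end Tridiagonal

/-- For a diagonal perturbation `J̌ = J + D` of a Jacobi matrix `J` with Green function `G`,
the orthonormal polynomial sequences `P` (for `J`) and `P̌` (for `J̌`) satisfy
`P̌_n(0) + Σ_{j=0}^{n-1} G_{n,j} d_j P̌_j(0) = P_n(0)`, i.e. `P̌(0) = (I + GD)⁻¹ P(0)`. -/
theorem perturbed_polynomials_at_zero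
    (a b d : ℕ → ℝ) (ha : ∀ n, 0 < a n)
    (G : ℕ → ℕ → ℝ)
    (hGtri : ∀ m n, m ≤ n → G m n = 0)
    (hG : ∀ m n : ℕ,
      (if m = 0 then 0 else a (m - 1) * G (m - 1) n) + b m * G m n +
        a m * G (m + 1) n = if m = n then 1 else 0)
    (P Pc : ℕ → ℝ → ℝ)
    (hP0 : ∀ x, P 0 x = 1)
    (hPrec : ∀ n : ℕ, ∀ x : ℝ,
      (if n = 0 then 0 else a (n - 1) * P (n - 1) x) + (b n - x) * P n x +
        a n * P (n + 1) x = 0)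
    (hPc0 : ∀ x, Pc 0 x = 1)
    (hPcrec : ∀ n : ℕ, ∀ x : ℝ,
      (if n = 0 then 0 else a (n - 1) * Pc (n - 1) x) + (b n + d n - x) * Pc n x +
        a n * Pc (n + 1) x = 0) :
    ∀ n : ℕ, Pc n 0 + ∑ j ∈ Finset.range n, G n j * d j * Pc j 0 = P n 0 := by
  exact perturbed_polynomials_at_zero_general (fun n ↦ .of_ne_zero (ha n).ne') ⟨hGtri, hG⟩
    ((hPc0 0).trans (hP0 0).symm)
    fun m ↦ by simpa [tridiag] using (hPcrec m 0).trans (hPrec m 0).symm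
end

section
/- Let α, β, γ ∈ ℂ with none of α, β, γ a nonpositive integer, let δ, w ∈ ℂ, and let k ∈ (0,1). Define f_{m,n} and c_n as in the context. Then the sequence {c_n} satisfies the recurrence of the local Heun solution: c_0 = 1, γ·c_1 = k²αβ − w, and for every n ≥ 1: (n−1+α)(n−1+β)·c_{n−1} − [ n·((n−1+γ)(1 + 1/k²) + δ/k² + α + β − γ − δ + 1) − w/k² + αβ ]·c_n + ((n+1)(n+γ)/k²)·c_{n+1} = 0. Consequently Σ c_n z^n is the local Heun solution Hℓ(1/k², −w/k² + αβ; α, β, γ, δ; z). -/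
/-- The Pochhammer symbol `(x)_n = x(x+1)⋯(x+n-1)`. -/
noncomputable def poch (x : ℂ) (n : ℕ) : ℂ := ∏ i ∈ Finset.range n, (x + (i : ℂ))

/-- The index set of tuples `(ℓ_1, j_1, …, ℓ_m, j_m)` with
`0 ≤ ℓ_1 ≤ j_1 < ℓ_2 ≤ j_2 < ⋯ < ℓ_m ≤ j_m < n`, encoded as pairs of functions
`(ℓ, j) : (Fin m → Fin n) × (Fin m → Fin n)`. -/
def heunIdx (m n : ℕ) : Finset ((Fin m → Fin n) × (Fin m → Fin n)) :=
  Finset.univ.filter fun p =>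
    (∀ s : Fin m, (p.1 s : ℕ) ≤ (p.2 s : ℕ)) ∧
    (∀ s t : Fin m, (s : ℕ) + 1 = (t : ℕ) → (p.2 s : ℕ) < (p.1 t : ℕ))

/-- The coefficients `f_{m,n}`: `f_{0,n} = k^{2n}`; for `1 ≤ m ≤ n`,
`f_{m,n} = (-1)^m k^{2n-2m} Σ ∏_{s=1}^m [j_s!(γ)_{j_s}(α)_{ℓ_s}(β)_{ℓ_s} /
(ℓ_s!(γ)_{ℓ_s}(α)_{j_s+1}(β)_{j_s+1})] k^{-2(j_s-ℓ_s)} (w - (1-k²)δℓ_s)`,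
the sum running over `heunIdx m n`; and `f_{m,n} = 0` for `m < 0` or `m > n`. -/
noncomputable def heunf (k : ℝ) (α β γ δ w : ℂ) (m : ℤ) (n : ℕ) : ℂ :=
  if m = 0 then (k : ℂ) ^ (2 * n)
  else if m < 0 ∨ (n : ℤ) < m then 0
  else (-1 : ℂ) ^ m.toNat * (k : ℂ) ^ (2 * (n : ℤ) - 2 * m) *
    ∑ p ∈ heunIdx m.toNat n, ∏ s : Fin m.toNat,
      ((Nat.factorial (p.2 s : ℕ) : ℂ) * poch γ (p.2 s : ℕ) * poch α (p.1 s : ℕ) *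
          poch β (p.1 s : ℕ)) /
        ((Nat.factorial (p.1 s : ℕ) : ℂ) * poch γ (p.1 s : ℕ) * poch α ((p.2 s : ℕ) + 1) *
          poch β ((p.2 s : ℕ) + 1)) *
      (k : ℂ) ^ (-(2 : ℤ) * (((p.2 s : ℕ) : ℤ) - ((p.1 s : ℕ) : ℤ))) *
      (w - (1 - (k : ℂ) ^ 2) * δ * ((p.1 s : ℕ) : ℂ))

/-- The Taylor coefficients `c_n = ((α)_n (β)_n / (n! (γ)_n)) Σ_{m=0}^n f_{m,n}`
of the local Heun solution. -/
noncomputable def heunc (k : ℝ) (α β γ δ w : ℂ) (n : ℕ) : ℂ :=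
  poch α n * poch β n / ((Nat.factorial n : ℂ) * poch γ n) *
    ∑ m ∈ Finset.range (n + 1), heunf k α β γ δ w (m : ℤ) n

/-!
Put `t_n = (α)_n (β)_n / (n! (γ)_n)`. The factor of `f_{m,n}` at a pair `(ℓ, j)` is a function of
`ℓ` times a function of `j`, and `Σ_m f_{m,n}` is `k^{2n}` times the sum of the products of such
factors over all chains below `n`, so that `c_n` is `t_n k^{2n}` times that sum. Splitting off the
last pair of the chains below `n + 1` with `j_m = n` gives
`(n+1)(γ+n) c_{n+1} = k² (α+n)(β+n) c_n - Σ_{ℓ ≤ n} (w - (1-k²) δ ℓ) c_ℓ`.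
The case `n = 0` is the initial condition, and the difference of two consecutive identities is `k²`
times the three-term recurrence.
-/

section ChainSum

/-- The chains `ℓ₁ ≤ j₁ < ℓ₂ ≤ j₂ < ⋯ < ℓ_m ≤ j_m < n` of natural numbers, as pairs `(ℓ, j)`. Unlike
in `heunIdx`, the entries do not live in a type depending on `n`, so that chains with different
bounds can be compared. -/
def interlacingPairs (m n : ℕ) : Finset ((Fin m → ℕ) × (Fin m → ℕ)) :=
  {p ∈ Fintype.piFinset (fun _ => Finset.range n) ×ˢ Fintype.piFinset (fun _ => Finset.range n) |
    (∀ s, p.1 s ≤ p.2 s) ∧ ∀ s t, s < t → p.2 s < p.1 t}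

lemma mem_interlacingPairs {m n : ℕ} {p : (Fin m → ℕ) × (Fin m → ℕ)} :
    p ∈ interlacingPairs m n ↔
      (∀ s, p.2 s < n) ∧ (∀ s, p.1 s ≤ p.2 s) ∧ ∀ s t, s < t → p.2 s < p.1 t := by
  simp only [interlacingPairs, Finset.mem_filter, Finset.mem_product, Fintype.mem_piFinset,
    Finset.mem_range]
  exact ⟨fun h => ⟨h.1.2, h.2⟩, fun h => ⟨⟨fun s => (h.2.1 s).trans_lt (h.1 s), h.1⟩, h.2⟩⟩

lemma snoc_mem_interlacingPairs {m n a b : ℕ} {ℓ j : Fin m → ℕ} :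
    (Fin.snoc (α := fun _ => ℕ) ℓ a, Fin.snoc (α := fun _ => ℕ) j b) ∈ interlacingPairs (m + 1) n ↔
      b < n ∧ a ≤ b ∧ (ℓ, j) ∈ interlacingPairs m a := by
  simp only [mem_interlacingPairs, Fin.forall_fin_succ', Fin.snoc_castSucc, Fin.snoc_last,
    Fin.castSucc_lt_castSucc_iff, Fin.castSucc_lt_last, forall_const]
  constructor
  · rintro ⟨⟨-, hb⟩, ⟨hle, hab⟩, hlt, -⟩
    exact ⟨hb, hab, fun s => (hlt s).2, hle, fun s => (hlt s).1⟩
  · rintro ⟨hb, hab, hja, hle, hlt⟩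
    exact ⟨⟨fun s => (hja s).trans (hab.trans_lt hb), hb⟩, ⟨hle, hab⟩, fun s => ⟨hlt s, hja s⟩,
      fun i h => absurd h (Fin.le_last _).not_gt, fun h => absurd h (lt_irrefl _)⟩

lemma lt_of_forall_succ_lt {X : Type*} [Preorder X] {m : ℕ} {ℓ j : Fin m → X} (hle : ∀ s, ℓ s ≤ j s)
    (hlt : ∀ s t : Fin m, (s : ℕ) + 1 = t → j s < ℓ t) {s t : Fin m} (hst : s < t) :
    j s < ℓ t := by
  cases m with
  | zero => exact s.elim0
  | succ m =>
    have hj : StrictMono j := Fin.strictMono_iff_lt_succ.2 fun i =>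
      (hlt i.castSucc i.succ (by simp)).trans_le (hle i.succ)
    obtain ⟨i, rfl⟩ := Fin.exists_succ_eq.2 (Fin.ne_zero_of_lt hst)
    exact (hj.monotone (Fin.le_castSucc_iff.2 hst)).trans_lt (hlt i.castSucc i.succ (by simp))

lemma coe_mem_interlacingPairs_iff {m n : ℕ} {p : (Fin m → Fin n) × (Fin m → Fin n)} :
    (fun s => (p.1 s : ℕ), fun s => (p.2 s : ℕ)) ∈ interlacingPairs m n ↔ p ∈ heunIdx m n := by
  simp only [mem_interlacingPairs, heunIdx, Finset.mem_filter_univ, Fin.is_lt, implies_true,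
    true_and]
  exact and_congr_right fun hle =>
    ⟨fun h s t hst => h s t (by omega), fun h s t hst => lt_of_forall_succ_lt hle h hst⟩

variable {R : Type*} [CommSemiring R] (g : ℕ → ℕ → R)

/-- The sum, over the chains `ℓ₁ ≤ j₁ < ⋯ < ℓ_m ≤ j_m < n`, of the products `∏ g(ℓ_s, j_s)`. -/
def chainSum (m n : ℕ) : R :=
  ∑ p ∈ interlacingPairs m n, ∏ s, g (p.1 s) (p.2 s)

/-- The sum of `∏ g(ℓ_s, j_s)` over the chains of every length below `n`; no such chain has length
greater than `n`. -/
def totalChainSum (n : ℕ) : R :=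
  ∑ m ∈ Finset.range (n + 1), chainSum g m n

lemma sum_heunIdx (m n : ℕ) :
    ∑ p ∈ heunIdx m n, ∏ s, g (p.1 s) (p.2 s) = chainSum g m n := by
  refine Finset.sum_nbij (fun p => (fun s => (p.1 s : ℕ), fun s => (p.2 s : ℕ)))
    (fun p hp => coe_mem_interlacingPairs_iff.2 hp) ?_ ?_ fun _ _ => rfl
  · intro p _ q _ hpq
    simp only [Prod.mk.injEq, funext_iff, Fin.val_inj] at hpq
    exact Prod.ext (funext hpq.1) (funext hpq.2)
  · intro q hq
    obtain ⟨hn, hle, -⟩ := mem_interlacingPairs.1 hq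
    exact ⟨(fun s => ⟨q.1 s, (hle s).trans_lt (hn s)⟩, fun s => ⟨q.2 s, hn s⟩),
      coe_mem_interlacingPairs_iff.1 hq, rfl⟩

lemma chainSum_zero (n : ℕ) : chainSum g 0 n = 1 := by
  simp [chainSum, interlacingPairs]

lemma chainSum_succ (m n : ℕ) :
    chainSum g (m + 1) n =
      ∑ b ∈ Finset.range n, ∑ a ∈ Finset.range (b + 1), g a b * chainSum g m a := by
  simp only [chainSum, Finset.mul_sum, Finset.sum_sigma']
  refine Finset.sum_bij'
    (fun p _ => ⟨p.2 (Fin.last m), p.1 (Fin.last m), Fin.init p.1, Fin.init p.2⟩)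
    (fun q _ => (Fin.snoc q.2.2.1 q.2.1, Fin.snoc q.2.2.2 q.1)) ?_ ?_ ?_ ?_ ?_
  · intro p hp
    rw [← Prod.mk.eta (p := p), ← Fin.snoc_init_self p.1, ← Fin.snoc_init_self p.2,
      snoc_mem_interlacingPairs] at hp
    simpa [Nat.lt_succ_iff] using hp
  · intro q hq
    simpa [snoc_mem_interlacingPairs, Nat.lt_succ_iff] using hq
  · simp
  · simp
  · intro p _
    rw [Fin.prod_univ_castSucc, mul_comm]
    rfl

lemma chainSum_eq_zero_of_lt {m n : ℕ} (h : n < m) : chainSum g m n = 0 := by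
  induction m generalizing n with
  | zero => exact absurd h n.not_lt_zero
  | succ m ih =>
    rw [chainSum_succ]
    refine Finset.sum_eq_zero fun b hb => Finset.sum_eq_zero fun a ha => ?_
    rw [Finset.mem_range] at ha hb
    rw [ih (by omega), mul_zero]

lemma sum_range_chainSum {n N : ℕ} (h : n < N) :
    ∑ m ∈ Finset.range N, chainSum g m n = totalChainSum g n := by
  refine (Finset.sum_subset (Finset.range_subset_range.2 h) fun m _ hm => ?_).symm
  exact chainSum_eq_zero_of_lt g (by simpa using hm)

lemma totalChainSum_succ (n : ℕ) :
    totalChainSum g (n + 1) =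
      totalChainSum g n + ∑ a ∈ Finset.range (n + 1), g a n * totalChainSum g a := by
  have split_last (m : ℕ) : chainSum g (m + 1) (n + 1) =
      chainSum g (m + 1) n + ∑ a ∈ Finset.range (n + 1), g a n * chainSum g m a := by
    simp only [chainSum_succ, Finset.sum_range_succ _ n]
  calc totalChainSum g (n + 1)
      = ∑ m ∈ Finset.range (n + 1), chainSum g (m + 1) n + chainSum g 0 n +
          ∑ m ∈ Finset.range (n + 1), ∑ a ∈ Finset.range (n + 1), g a n * chainSum g m a := by
        rw [totalChainSum, Finset.sum_range_succ' _ (n + 1)]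
        simp only [split_last, Finset.sum_add_distrib, chainSum_zero, add_right_comm]
    _ = totalChainSum g n + ∑ a ∈ Finset.range (n + 1), g a n * totalChainSum g a := by
        rw [← Finset.sum_range_succ' (fun m => chainSum g m n), sum_range_chainSum g (by omega),
          Finset.sum_comm]
        congr 1
        refine Finset.sum_congr rfl fun a ha => ?_
        rw [← Finset.mul_sum, sum_range_chainSum g (Finset.mem_range.1 ha)]

end ChainSum

section HypergeometricCoefficient

lemma poch_eq_ascPochhammer_eval (x : ℂ) (n : ℕ) : poch x n = (ascPochhammer ℂ n).eval x := by
  induction n with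
  | zero => simp [poch]
  | succ n ih => rw [poch, Finset.prod_range_succ, ascPochhammer_succ_eval, ← ih, poch]

lemma ascPochhammer_eval_ne_zero {A : Type*} [CommRing A] [IsDomain A] {x : A}
    (hx : ∀ j : ℕ, x ≠ -(j : A)) (n : ℕ) : (ascPochhammer A n).eval x ≠ 0 := by
  rw [Ne, ascPochhammer_eval_eq_zero_iff]
  rintro ⟨j, -, hj⟩
  exact hx j (by rw [hj, neg_neg])

variable {𝕂 : Type*} [Field 𝕂] [CharZero 𝕂] {a b c : 𝕂}

lemma ordinaryHypergeometricCoefficient_ne_zero (ha : ∀ j : ℕ, a ≠ -(j : 𝕂))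
    (hb : ∀ j : ℕ, b ≠ -(j : 𝕂)) (hc : ∀ j : ℕ, c ≠ -(j : 𝕂)) (n : ℕ) :
    ordinaryHypergeometricCoefficient a b c n ≠ 0 := by
  have hn : (n.factorial : 𝕂) ≠ 0 := Nat.cast_ne_zero.2 n.factorial_ne_zero
  exact mul_ne_zero (mul_ne_zero (mul_ne_zero (inv_ne_zero hn) (ascPochhammer_eval_ne_zero ha n))
    (ascPochhammer_eval_ne_zero hb n)) (inv_ne_zero (ascPochhammer_eval_ne_zero hc n))

lemma mul_ordinaryHypergeometricCoefficient_succ {n : ℕ} (hc : c + n ≠ 0) :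
    (n + 1) * (c + n) * ordinaryHypergeometricCoefficient a b c (n + 1) =
      (a + n) * (b + n) * ordinaryHypergeometricCoefficient a b c n := by
  have hn : (n + 1 : 𝕂) ≠ 0 := n.cast_add_one_ne_zero
  simp only [ordinaryHypergeometricCoefficient, ascPochhammer_succ_eval, Nat.factorial_succ,
    Nat.cast_mul, Nat.cast_succ, mul_inv]
  field_simp

end HypergeometricCoefficient

section Heun

/-- The factor contributed by a pair `(ℓ, j)` to the summands of `k^{-2n} f_{m,n}`; the prefactor
`(-1)^m k^{-2m}` of the sum defining `f_{m,n}` is distributed over the `m` pairs. -/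
noncomputable def heunWeight (k : ℝ) (α β γ δ w : ℂ) (ℓ j : ℕ) : ℂ :=
  -((w - (1 - (k : ℂ) ^ 2) * δ * ℓ) *
      (ordinaryHypergeometricCoefficient α β γ ℓ * (k : ℂ) ^ (2 * ℓ))) /
    ((α + j) * (β + j) * ordinaryHypergeometricCoefficient α β γ j * (k : ℂ) ^ (2 * (j + 1)))

variable {k : ℝ} {α β γ : ℂ} (δ w : ℂ)

lemma heunWeight_eq (hk : k ≠ 0) (ℓ j : ℕ) :
    heunWeight k α β γ δ w ℓ j = -((k : ℂ) ^ 2)⁻¹ *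
      (((Nat.factorial j : ℂ) * poch γ j * poch α ℓ * poch β ℓ) /
          ((Nat.factorial ℓ : ℂ) * poch γ ℓ * poch α (j + 1) * poch β (j + 1)) *
        (k : ℂ) ^ (-(2 : ℤ) * ((j : ℤ) - (ℓ : ℤ))) * (w - (1 - (k : ℂ) ^ 2) * δ * ℓ)) := by
  have hkC : (k : ℂ) ≠ 0 := Complex.ofReal_ne_zero.2 hk
  have hpow : (k : ℂ) ^ (-(2 : ℤ) * ((j : ℤ) - (ℓ : ℤ))) =
      (k : ℂ) ^ (2 * ℓ) * ((k : ℂ) ^ (2 * j))⁻¹ := by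
    rw [← zpow_natCast, ← zpow_natCast, ← zpow_neg, ← zpow_add₀ hkC]
    push_cast
    ring_nf
  simp only [heunWeight, ordinaryHypergeometricCoefficient, poch_eq_ascPochhammer_eval,
    ascPochhammer_succ_eval, hpow, div_eq_mul_inv, mul_inv, inv_inv]
  ring

lemma heunf_natCast_eq_mul_chainSum (hk : k ≠ 0) (m n : ℕ) :
    heunf k α β γ δ w m n = (k : ℂ) ^ (2 * n) * chainSum (heunWeight k α β γ δ w) m n := by
  have hkC : (k : ℂ) ≠ 0 := Complex.ofReal_ne_zero.2 hk
  unfold heunf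
  split_ifs with hm hmn
  · rw [Nat.cast_eq_zero.1 hm, chainSum_zero, mul_one]
  · rw [chainSum_eq_zero_of_lt _ (by omega), mul_zero]
  · have hscale : (k : ℂ) ^ (2 * n) * (-((k : ℂ) ^ 2)⁻¹) ^ m =
        (-1) ^ m * (k : ℂ) ^ (2 * (n : ℤ) - 2 * m) := by
      rw [zpow_sub₀ hkC, neg_eq_neg_one_mul, mul_pow, inv_pow, ← pow_mul, div_eq_mul_inv]
      norm_cast
      ring
    simp only [← sum_heunIdx, heunWeight_eq δ w hk,
      Finset.prod_mul_distrib (f := fun _ => -((k : ℂ) ^ 2)⁻¹), Finset.prod_const,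
      Finset.card_univ, Fintype.card_fin, ← Finset.mul_sum]
    rw [← mul_assoc, hscale]
    rfl

lemma heunc_eq_mul_totalChainSum (hk : k ≠ 0) (n : ℕ) :
    heunc k α β γ δ w n = ordinaryHypergeometricCoefficient α β γ n * (k : ℂ) ^ (2 * n) *
      totalChainSum (heunWeight k α β γ δ w) n := by
  simp only [heunc, heunf_natCast_eq_mul_chainSum δ w hk, ← Finset.mul_sum, totalChainSum,
    ordinaryHypergeometricCoefficient, poch_eq_ascPochhammer_eval]
  ring

lemma heunc_zero (k : ℝ) (α β γ δ w : ℂ) : heunc k α β γ δ w 0 = 1 := by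
  simp [heunc, heunf, poch]

lemma mul_heunc_succ (hk : k ≠ 0) (hα : ∀ j : ℕ, α ≠ -(j : ℂ)) (hβ : ∀ j : ℕ, β ≠ -(j : ℂ))
    (hγ : ∀ j : ℕ, γ ≠ -(j : ℂ)) (n : ℕ) :
    (n + 1) * (γ + n) * heunc k α β γ δ w (n + 1) =
      (k : ℂ) ^ 2 * (α + n) * (β + n) * heunc k α β γ δ w n -
        ∑ ℓ ∈ Finset.range (n + 1), (w - (1 - (k : ℂ) ^ 2) * δ * ℓ) * heunc k α β γ δ w ℓ := by
  have add_ne_zero {x : ℂ} (hx : ∀ j : ℕ, x ≠ -(j : ℂ)) : x + n ≠ 0 :=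
    fun h => hx n (eq_neg_of_add_eq_zero_left h)
  set t := ordinaryHypergeometricCoefficient α β γ
  have hU := totalChainSum_succ (heunWeight k α β γ δ w) n
  set U := totalChainSum (heunWeight k α β γ δ w)
  set r : ℂ := (α + n) * (β + n) * t n * (k : ℂ) ^ (2 * (n + 1)) with hr
  have hr0 : r ≠ 0 :=
    mul_ne_zero (mul_ne_zero (mul_ne_zero (add_ne_zero hα) (add_ne_zero hβ))
      (ordinaryHypergeometricCoefficient_ne_zero hα hβ hγ n))
      (pow_ne_zero _ (Complex.ofReal_ne_zero.2 hk))
  have hweight (ℓ : ℕ) : r * (heunWeight k α β γ δ w ℓ n * U ℓ) =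
      -((w - (1 - (k : ℂ) ^ 2) * δ * ℓ) * heunc k α β γ δ w ℓ) := by
    rw [heunWeight, heunc_eq_mul_totalChainSum δ w hk, ← hr, ← mul_assoc, mul_div_cancel₀ _ hr0]
    ring
  calc (n + 1) * (γ + n) * heunc k α β γ δ w (n + 1)
      = (n + 1) * (γ + n) * t (n + 1) * (k : ℂ) ^ (2 * (n + 1)) * U (n + 1) := by
        rw [heunc_eq_mul_totalChainSum δ w hk]
        ring
    _ = r * U (n + 1) := by
        rw [mul_ordinaryHypergeometricCoefficient_succ (add_ne_zero hγ)]
    _ = r * U n - ∑ ℓ ∈ Finset.range (n + 1),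
          (w - (1 - (k : ℂ) ^ 2) * δ * ℓ) * heunc k α β γ δ w ℓ := by
        rw [hU, mul_add, Finset.mul_sum, sub_eq_add_neg, ← Finset.sum_neg_distrib]
        simp only [hweight]
    _ = (k : ℂ) ^ 2 * (α + n) * (β + n) * heunc k α β γ δ w n -
          ∑ ℓ ∈ Finset.range (n + 1), (w - (1 - (k : ℂ) ^ 2) * δ * ℓ) * heunc k α β γ δ w ℓ := by
        rw [heunc_eq_mul_totalChainSum δ w hk n, hr]
        ring

end Heun

theorem heun_coefficients_recurrence_general (k : ℝ) (hk : k ≠ 0)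
    (α β γ δ w : ℂ)
    (hα : ∀ j : ℕ, α ≠ -(j : ℂ)) (hβ : ∀ j : ℕ, β ≠ -(j : ℂ))
    (hγ : ∀ j : ℕ, γ ≠ -(j : ℂ)) :
    heunc k α β γ δ w 0 = 1 ∧
    γ * heunc k α β γ δ w 1 = (k : ℂ) ^ 2 * α * β - w ∧
    ∀ n : ℕ, 1 ≤ n →
      ((n : ℂ) - 1 + α) * ((n : ℂ) - 1 + β) * heunc k α β γ δ w (n - 1) -
        ((n : ℂ) * (((n : ℂ) - 1 + γ) * (1 + 1 / (k : ℂ) ^ 2) + δ / (k : ℂ) ^ 2 +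
              α + β - γ - δ + 1) - w / (k : ℂ) ^ 2 + α * β) * heunc k α β γ δ w n +
        ((n : ℂ) + 1) * ((n : ℂ) + γ) / (k : ℂ) ^ 2 * heunc k α β γ δ w (n + 1) = 0 := by
  have hkC : (k : ℂ) ≠ 0 := Complex.ofReal_ne_zero.2 hk
  have summed := mul_heunc_succ δ w hk hα hβ hγ
  refine ⟨heunc_zero k α β γ δ w, ?_, fun n hn => ?_⟩
  · simpa [heunc_zero] using summed 0
  · obtain ⟨n, rfl⟩ := Nat.exists_eq_add_of_le' hn
    have summed_succ := summed (n + 1)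
    rw [Finset.sum_range_succ] at summed_succ
    rw [Nat.add_sub_cancel]
    push_cast at summed_succ ⊢
    field_simp
    linear_combination summed_succ - summed n

/-- The sequence `c_n` satisfies the three-term recurrence defining the local Heun
solution `Hℓ(1/k², -w/k² + αβ; α, β, γ, δ; z)`, hence `Σ c_n zⁿ` is that solution. -/
theorem heun_coefficients_recurrence (k : ℝ) (hk0 : 0 < k) (hk1 : k < 1)
    (α β γ δ w : ℂ)
    (hα : ∀ j : ℕ, α ≠ -(j : ℂ)) (hβ : ∀ j : ℕ, β ≠ -(j : ℂ))
    (hγ : ∀ j : ℕ, γ ≠ -(j : ℂ)) :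
    heunc k α β γ δ w 0 = 1 ∧
    γ * heunc k α β γ δ w 1 = (k : ℂ) ^ 2 * α * β - w ∧
    ∀ n : ℕ, 1 ≤ n →
      ((n : ℂ) - 1 + α) * ((n : ℂ) - 1 + β) * heunc k α β γ δ w (n - 1) -
        ((n : ℂ) * (((n : ℂ) - 1 + γ) * (1 + 1 / (k : ℂ) ^ 2) + δ / (k : ℂ) ^ 2 +
              α + β - γ - δ + 1) - w / (k : ℂ) ^ 2 + α * β) * heunc k α β γ δ w n +
        ((n : ℂ) + 1) * ((n : ℂ) + γ) / (k : ℂ) ^ 2 * heunc k α β γ δ w (n + 1) = 0 :=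
  heun_coefficients_recurrence_general k hk0.ne' α β γ δ w hα hβ hγ
end

section
/- Let α, β, γ, w ∈ ℂ with none of α, β, γ a nonpositive integer, and let k ∈ (0,1). Define f̃_{m,n} and c̃_n as in the context. Then the sequence {c̃_n} satisfies the recurrence of the local Heun solution with δ = β + 1: c̃_0 = 1, γ·c̃_1 = βγ − w, and for every n ≥ 1: (n−1+α)(n−1+β)·c̃_{n−1} − [ n·((n−1+γ)(1 + 1/k²) + (β+1)/k² + α − γ) + (βγ − w)/k² ]·c̃_n + ((n+1)(n+γ)/k²)·c̃_{n+1} = 0. Consequently Σ c̃_n z^n is the local Heun solution Hℓ(1/k², −(w−βγ)/k²; α, β, γ, β+1; z). -/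
/-- The coefficients `f̃_{m,n}` for the case `δ = β + 1`: `f̃_{0,n} = 1`; for
`1 ≤ m ≤ n`, `f̃_{m,n} = (-1)^m Σ ∏_{s=1}^m [j_s!(α)_{j_s}(β)_{ℓ_s}(γ)_{ℓ_s} /
(ℓ_s!(α)_{ℓ_s}(β)_{j_s+1}(γ)_{j_s+1})] k^{2(j_s-ℓ_s)}`, the sum running over
`heunIdx m n`; and `f̃_{m,n} = 0` for `m < 0` or `m > n`. -/
noncomputable def heunft (k : ℝ) (α β γ : ℂ) (m : ℤ) (n : ℕ) : ℂ :=
  if m = 0 then 1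
  else if m < 0 ∨ (n : ℤ) < m then 0
  else (-1 : ℂ) ^ m.toNat *
    ∑ p ∈ heunIdx m.toNat n, ∏ s : Fin m.toNat,
      ((Nat.factorial (p.2 s : ℕ) : ℂ) * poch α (p.2 s : ℕ) * poch β (p.1 s : ℕ) *
          poch γ (p.1 s : ℕ)) /
        ((Nat.factorial (p.1 s : ℕ) : ℂ) * poch α (p.1 s : ℕ) * poch β ((p.2 s : ℕ) + 1) *
          poch γ ((p.2 s : ℕ) + 1)) *
      (k : ℂ) ^ ((2 : ℤ) * (((p.2 s : ℕ) : ℤ) - ((p.1 s : ℕ) : ℤ)))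

/-- The Taylor coefficients `c̃_n = ((β)_n / n!) Σ_{m=0}^n f̃_{m,n} wᵐ` of the local
Heun solution for `δ = β + 1`. -/
noncomputable def heunct (k : ℝ) (α β γ w : ℂ) (n : ℕ) : ℂ :=
  poch β n / (Nat.factorial n : ℂ) *
    ∑ m ∈ Finset.range (n + 1), heunft k α β γ (m : ℤ) n * w ^ m

/-!
The coefficients `f̃_{m,n}` are the terms of a Neumann series: peeling off the last pair
`(ℓ_m, j_m)` shows that `S_n = ∑_m f̃_{m,n} wᵐ` solves the discrete Volterra equation
`S_{n+1} - S_n = -w ∑_{l ≤ n} T(l, n) S_l`, where `T` is the kernel appearing in the product.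
Up to a factor depending on `l` only, `T(l, n)` is a hypergeometric term in `n`, so
`T(l, n + 1) / T(l, n)` does not depend on `l`; eliminating the sum between two consecutive
equations leaves a three-term recurrence for `S_n`, which the factor `(β)_n / n!` turns into
Heun's.
-/

section Interlaced

/-- The interlaced pairs `0 ≤ ℓ_1 ≤ j_1 < ℓ_2 ≤ ⋯ < ℓ_m ≤ j_m < n` of `heunIdx`, with entries in
`ℕ` rather than `Fin n`, so that pairs with different bounds `n` live in the same type. -/
def interlacedPairs (m n : ℕ) : Finset ((Fin m → ℕ) × (Fin m → ℕ)) :=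
  (heunIdx m n).map
    ((Fin.valEmbedding.arrowCongrRight).prodMap (Fin.valEmbedding.arrowCongrRight))

theorem mem_interlacedPairs {m n : ℕ} {p : (Fin m → ℕ) × (Fin m → ℕ)} :
    p ∈ interlacedPairs m n ↔ (∀ s, p.2 s < n) ∧ (∀ s, p.1 s ≤ p.2 s) ∧
      ∀ s t : Fin m, (s : ℕ) + 1 = t → p.2 s < p.1 t := by
  simp only [interlacedPairs, heunIdx, Finset.mem_map, Finset.mem_filter, Finset.mem_univ,
    true_and]
  constructor
  · rintro ⟨q, ⟨hle, hlt⟩, rfl⟩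
    exact ⟨fun s => (q.2 s).isLt, hle, hlt⟩
  · rintro ⟨hn, hle, hlt⟩
    exact ⟨(fun s => ⟨p.1 s, (hle s).trans_lt (hn s)⟩, fun s => ⟨p.2 s, hn s⟩), ⟨hle, hlt⟩, rfl⟩

theorem snd_castSucc_lt_fst_last_of_mem_interlacedPairs {m n : ℕ}
    {p : (Fin (m + 1) → ℕ) × (Fin (m + 1) → ℕ)} (hp : p ∈ interlacedPairs (m + 1) n)
    (s : Fin m) : p.2 s.castSucc < p.1 (Fin.last m) := by
  obtain ⟨-, hle, hlt⟩ := mem_interlacedPairs.1 hp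
  have hadj (i : Fin m) : p.2 i.castSucc < p.1 i.succ := hlt _ _ (by simp)
  have hmono : StrictMono p.1 := Fin.strictMono_iff_lt_succ.2 fun i => (hle _).trans_lt (hadj i)
  exact (hadj s).trans_le (hmono.monotone (Fin.le_last _))

theorem snoc_mem_interlacedPairs {m n l j : ℕ} {p : (Fin m → ℕ) × (Fin m → ℕ)} :
    (Fin.snoc (α := fun _ => ℕ) p.1 l, Fin.snoc (α := fun _ => ℕ) p.2 j)
      ∈ interlacedPairs (m + 1) n ↔ j < n ∧ l ≤ j ∧ p ∈ interlacedPairs m l := by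
  constructor
  · intro h
    have hl := snd_castSucc_lt_fst_last_of_mem_interlacedPairs h
    obtain ⟨hn, hle, hlt⟩ := mem_interlacedPairs.1 h
    refine ⟨by simpa using hn (Fin.last m), by simpa using hle (Fin.last m),
      mem_interlacedPairs.2 ⟨by simpa using hl, fun s => by simpa using hle s.castSucc,
        fun s t hst => by simpa using hlt s.castSucc t.castSucc (by simpa using hst)⟩⟩
  · rintro ⟨hj, hlj, hp⟩
    obtain ⟨hl, hle, hlt⟩ := mem_interlacedPairs.1 hp
    simp only [mem_interlacedPairs, Fin.forall_fin_succ', Fin.snoc_castSucc, Fin.snoc_last,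
      Fin.val_castSucc, Fin.val_last]
    exact ⟨⟨fun s => (hl s).trans (by omega), hj⟩, ⟨hle, hlj⟩,
      fun s => ⟨hlt s, fun _ => hl s⟩, fun t ht => by omega, fun h => by omega⟩

variable {R : Type*} [CommSemiring R] (T : ℕ → ℕ → R)

/-- The sum of `∏ s, T (ℓ s) (j s)` over all interlaced pairs `(ℓ, j)` of length `m` below `n`;
up to sign, `f̃_{m,n}` is such a sum. -/
def interlacedSum (m n : ℕ) : R :=
  ∑ p ∈ interlacedPairs m n, ∏ s, T (p.1 s) (p.2 s)

theorem sum_heunIdx_prod (m n : ℕ) :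
    ∑ p ∈ heunIdx m n, ∏ s, T (p.1 s) (p.2 s) = interlacedSum T m n := by
  rw [interlacedSum, interlacedPairs, Finset.sum_map]
  rfl

@[simp]
theorem interlacedSum_zero (n : ℕ) : interlacedSum T 0 n = 1 := by
  simp [← sum_heunIdx_prod, heunIdx]

theorem interlacedSum_succ (m n : ℕ) :
    interlacedSum T (m + 1) n =
      ∑ j ∈ Finset.range n, ∑ l ∈ Finset.range (j + 1), T l j * interlacedSum T m l := by
  simp_rw [interlacedSum, Finset.mul_sum, Finset.sum_sigma']
  refine Finset.sum_bij'
    (fun p _ => ⟨p.2 (Fin.last m), p.1 (Fin.last m), Fin.init p.1, Fin.init p.2⟩)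
    (fun q _ => (Fin.snoc (α := fun _ => ℕ) q.2.2.1 q.2.1,
      Fin.snoc (α := fun _ => ℕ) q.2.2.2 q.1)) ?_ ?_ ?_ ?_ ?_
  · intro p hp
    rw [← Prod.mk.eta (p := p), ← Fin.snoc_init_self p.1, ← Fin.snoc_init_self p.2] at hp
    simpa only [Finset.mem_sigma, Finset.mem_range, Nat.lt_succ_iff] using
      snoc_mem_interlacedPairs (p := (Fin.init p.1, Fin.init p.2)).1 hp
  · intro q hq
    exact snoc_mem_interlacedPairs.2 (by simpa [Nat.lt_succ_iff] using hq)
  · intro p _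
    simp
  · intro q _
    simp
  · intro p _
    rw [Fin.prod_univ_castSucc, mul_comm]
    rfl

theorem interlacedSum_eq_zero_of_lt {m n : ℕ} (h : n < m) : interlacedSum T m n = 0 := by
  induction m generalizing n with
  | zero => omega
  | succ m ih =>
    rw [interlacedSum_succ]
    refine Finset.sum_eq_zero fun j hj => Finset.sum_eq_zero fun l hl => ?_
    rw [Finset.mem_range] at hj hl
    rw [ih (by omega), mul_zero]

/-- The Neumann series `∑ m, xᵐ * interlacedSum T m n`, truncated at `m = n` because the later
terms vanish. -/
def neumannSum (x : R) (n : ℕ) : R :=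
  ∑ m ∈ Finset.range (n + 1), x ^ m * interlacedSum T m n

@[simp]
theorem neumannSum_zero (x : R) : neumannSum T x 0 = 1 := by
  simp [neumannSum]

theorem neumannSum_eq_sum_range (x : R) {n N : ℕ} (h : n < N) :
    neumannSum T x n = ∑ m ∈ Finset.range N, x ^ m * interlacedSum T m n := by
  refine Finset.sum_subset (Finset.range_mono h) fun m _ hm => ?_
  rw [interlacedSum_eq_zero_of_lt T (by simpa using hm), mul_zero]

theorem neumannSum_eq_one_add (x : R) (n : ℕ) :
    neumannSum T x n = 1 + x * ∑ j ∈ Finset.range n, ∑ l ∈ Finset.range (j + 1),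
      T l j * neumannSum T x l := by
  calc neumannSum T x n
      = 1 + ∑ m ∈ Finset.range n, x ^ (m + 1) * interlacedSum T (m + 1) n := by
        rw [neumannSum, Finset.sum_range_succ', pow_zero, interlacedSum_zero, one_mul, add_comm]
    _ = 1 + x * ∑ j ∈ Finset.range n, ∑ l ∈ Finset.range (j + 1),
          T l j * ∑ m ∈ Finset.range n, x ^ m * interlacedSum T m l := by
        simp_rw [interlacedSum_succ, Finset.mul_sum]
        rw [Finset.sum_comm]
        refine congrArg _ (Finset.sum_congr rfl fun j _ => ?_)
        rw [Finset.sum_comm]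
        refine Finset.sum_congr rfl fun l _ => Finset.sum_congr rfl fun m _ => ?_
        ring
    _ = 1 + x * ∑ j ∈ Finset.range n, ∑ l ∈ Finset.range (j + 1),
          T l j * neumannSum T x l := by
        refine congrArg (1 + x * ·)
          (Finset.sum_congr rfl fun j hj => Finset.sum_congr rfl fun l hl => ?_)
        rw [Finset.mem_range] at hj hl
        rw [neumannSum_eq_sum_range T x (show l < n by omega)]

theorem neumannSum_succ (x : R) (n : ℕ) :
    neumannSum T x (n + 1) =
      neumannSum T x n + x * ∑ l ∈ Finset.range (n + 1), T l n * neumannSum T x l := by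
  rw [neumannSum_eq_one_add, Finset.sum_range_succ, mul_add, ← add_assoc,
    ← neumannSum_eq_one_add]

end Interlaced

theorem neumannSum_three_term {R : Type*} [CommRing R] (T : ℕ → ℕ → R) (x : R) {a b : R} {n : ℕ}
    (hdiag : a * T (n + 1) (n + 1) = 1) (hstep : ∀ l ≤ n, a * T l (n + 1) = b * T l n) :
    a * (neumannSum T x (n + 2) - neumannSum T x (n + 1)) =
      b * (neumannSum T x (n + 1) - neumannSum T x n) + x * neumannSum T x (n + 1) := by
  have hsum : a * ∑ l ∈ Finset.range (n + 1), T l (n + 1) * neumannSum T x l =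
      b * ∑ l ∈ Finset.range (n + 1), T l n * neumannSum T x l := by
    simp_rw [Finset.mul_sum, ← mul_assoc]
    refine Finset.sum_congr rfl fun l hl => ?_
    rw [hstep l (Finset.mem_range_succ_iff.1 hl)]
  have hnext := neumannSum_succ T x (n + 1)
  rw [Finset.sum_range_succ] at hnext
  linear_combination a * hnext - b * neumannSum_succ T x n + x * hsum +
    x * neumannSum T x (n + 1) * hdiag

section Pochhammer

@[simp]
theorem poch_zero (x : ℂ) : poch x 0 = 1 :=
  Finset.prod_range_zero _

theorem poch_succ (x : ℂ) (n : ℕ) : poch x (n + 1) = poch x n * (x + n) :=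
  Finset.prod_range_succ _ _

theorem poch_ne_zero {x : ℂ} (hx : ∀ j : ℕ, x ≠ -(j : ℂ)) (n : ℕ) : poch x n ≠ 0 :=
  Finset.prod_ne_zero_iff.2 fun i _ => add_eq_zero_iff_eq_neg.not.2 (hx i)

theorem poch_succ_div_factorial_succ (x : ℂ) (n : ℕ) :
    poch x (n + 1) / (Nat.factorial (n + 1) : ℂ) =
      poch x n / (Nat.factorial n : ℂ) * ((x + n) / (n + 1)) := by
  rw [poch_succ, Nat.factorial_succ, Nat.cast_mul, Nat.cast_add_one, mul_comm ((n : ℂ) + 1),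
    mul_div_mul_comm]

end Pochhammer

section Kernel

/-- The factor of `f̃_{m,n}` contributed by a single pair `(ℓ_s, j_s) = (l, j)`. -/
noncomputable def heunKernel (k α β γ : ℂ) (l j : ℕ) : ℂ :=
  ((Nat.factorial j : ℂ) * poch α j * poch β l * poch γ l) /
    ((Nat.factorial l : ℂ) * poch α l * poch β (j + 1) * poch γ (j + 1)) *
    k ^ ((2 : ℤ) * ((j : ℤ) - (l : ℤ)))

theorem heunKernel_zero_zero (k α β γ : ℂ) : heunKernel k α β γ 0 0 = (β * γ)⁻¹ := by
  simp [heunKernel, poch_succ]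

theorem heunKernel_self (k : ℂ) {α β γ : ℂ} (hα : ∀ j : ℕ, α ≠ -(j : ℂ))
    (hβ : ∀ j : ℕ, β ≠ -(j : ℂ)) (hγ : ∀ j : ℕ, γ ≠ -(j : ℂ)) (n : ℕ) :
    (β + n) * (γ + n) * heunKernel k α β γ n n = 1 := by
  have hα' := poch_ne_zero hα n
  have hβ' := poch_ne_zero hβ n
  have hγ' := poch_ne_zero hγ n
  have hβn : β + n ≠ 0 := add_eq_zero_iff_eq_neg.not.2 (hβ n)
  have hγn : γ + n ≠ 0 := add_eq_zero_iff_eq_neg.not.2 (hγ n)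
  have hfac : (Nat.factorial n : ℂ) ≠ 0 := Nat.cast_ne_zero.2 n.factorial_ne_zero
  rw [heunKernel, sub_self, mul_zero, zpow_zero, poch_succ, poch_succ]
  field_simp

theorem heunKernel_succ_right {k : ℂ} (hk : k ≠ 0) (α β γ : ℂ) (l n : ℕ) :
    heunKernel k α β γ l (n + 1) =
      (n + 1 : ℕ) * (α + n) * k ^ 2 / ((β + (n + 1 : ℕ)) * (γ + (n + 1 : ℕ))) *
        heunKernel k α β γ l n := by
  have hpow : k ^ ((2 : ℤ) * (((n + 1 : ℕ) : ℤ) - l)) = k ^ 2 * k ^ ((2 : ℤ) * ((n : ℤ) - l)) := by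
    rw [← zpow_natCast, ← zpow_add₀ hk]
    congr 1
    push_cast
    ring
  rw [heunKernel, heunKernel, hpow, poch_succ β (n + 1), poch_succ γ (n + 1), poch_succ α n,
    Nat.factorial_succ, Nat.cast_mul]
  generalize k ^ ((2 : ℤ) * ((n : ℤ) - l)) = z, β + (n + 1 : ℕ) = b, γ + (n + 1 : ℕ) = c
  ring

theorem neumannSum_heunKernel_three_term {k α β γ : ℂ} (hk : k ≠ 0)
    (hα : ∀ j : ℕ, α ≠ -(j : ℂ)) (hβ : ∀ j : ℕ, β ≠ -(j : ℂ)) (hγ : ∀ j : ℕ, γ ≠ -(j : ℂ))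
    (x : ℂ) (n : ℕ) :
    let S := neumannSum (heunKernel k α β γ) x
    (β + (n + 1)) * (γ + (n + 1)) * (S (n + 2) - S (n + 1)) =
      (n + 1) * (α + n) * k ^ 2 * (S (n + 1) - S n) + x * S (n + 1) := by
  have hdiag := heunKernel_self k hα hβ hγ (n + 1)
  have hstep (l : ℕ) : (β + (n + 1 : ℕ)) * (γ + (n + 1 : ℕ)) * heunKernel k α β γ l (n + 1) =
      (n + 1 : ℕ) * (α + n) * k ^ 2 * heunKernel k α β γ l n := by
    rw [heunKernel_succ_right hk, ← mul_assoc,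
      mul_div_cancel₀ _ (left_ne_zero_of_mul_eq_one hdiag)]
  exact_mod_cast neumannSum_three_term (heunKernel k α β γ) x hdiag fun l _ => hstep l

end Kernel

section Coefficients

theorem heunft_natCast (k : ℝ) (α β γ : ℂ) (m n : ℕ) :
    heunft k α β γ m n = (-1) ^ m * interlacedSum (heunKernel k α β γ) m n := by
  rw [heunft]
  split_ifs with hzero hout
  · obtain rfl : m = 0 := by exact_mod_cast hzero
    simp
  · rw [interlacedSum_eq_zero_of_lt _ (by omega), mul_zero]
  · rw [← sum_heunIdx_prod]
    rfl

theorem heunct_eq_mul_neumannSum (k : ℝ) (α β γ w : ℂ) (n : ℕ) :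
    heunct k α β γ w n =
      poch β n / (Nat.factorial n : ℂ) * neumannSum (heunKernel k α β γ) (-w) n := by
  rw [heunct, neumannSum]
  refine congrArg _ (Finset.sum_congr rfl fun m _ => ?_)
  rw [heunft_natCast, neg_pow w]
  ring

theorem heunct_zero (k : ℝ) (α β γ w : ℂ) : heunct k α β γ w 0 = 1 := by
  simp [heunct_eq_mul_neumannSum]

variable (k : ℝ) {α β γ : ℂ} (w : ℂ)

theorem mul_heunct_one (hβ : β ≠ 0) (hγ : γ ≠ 0) :
    γ * heunct k α β γ w 1 = β * γ - w := by
  rw [heunct_eq_mul_neumannSum, neumannSum_succ, Finset.sum_range_one, neumannSum_zero,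
    heunKernel_zero_zero, poch_succ_div_factorial_succ, poch_zero, Nat.factorial_zero]
  push_cast
  field_simp
  ring

theorem heunct_add_two (hk : k ≠ 0) (hα : ∀ j : ℕ, α ≠ -(j : ℂ)) (hβ : ∀ j : ℕ, β ≠ -(j : ℂ))
    (hγ : ∀ j : ℕ, γ ≠ -(j : ℂ)) (n : ℕ) :
    ((n : ℂ) + α) * (n + β) * heunct k α β γ w n -
        ((n + 1) * ((n + γ) * (1 + 1 / (k : ℂ) ^ 2) + (β + 1) / (k : ℂ) ^ 2 + α - γ) +
          (β * γ - w) / (k : ℂ) ^ 2) * heunct k α β γ w (n + 1) +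
        ((n : ℂ) + 1 + 1) * (n + 1 + γ) / (k : ℂ) ^ 2 * heunct k α β γ w (n + 2) = 0 := by
  have hkC : (k : ℂ) ≠ 0 := Complex.ofReal_ne_zero.2 hk
  have hthree := neumannSum_heunKernel_three_term hkC hα hβ hγ (-w) n
  have hn1 : (n : ℂ) + 1 ≠ 0 := Nat.cast_add_one_ne_zero n
  have hn2 : (n : ℂ) + 1 + 1 ≠ 0 := by exact_mod_cast (n + 1).succ_ne_zero
  simp only [heunct_eq_mul_neumannSum, poch_succ_div_factorial_succ, Nat.cast_succ]
  generalize poch β n / (Nat.factorial n : ℂ) = q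
  field_simp
  linear_combination q * (β + n) * hthree

end Coefficients

theorem heun_tilde_coefficients_recurrence_general {k : ℝ} (hk : k ≠ 0) {α β γ : ℂ} (w : ℂ)
    (hα : ∀ j : ℕ, α ≠ -(j : ℂ)) (hβ : ∀ j : ℕ, β ≠ -(j : ℂ)) (hγ : ∀ j : ℕ, γ ≠ -(j : ℂ)) :
    heunct k α β γ w 0 = 1 ∧
    γ * heunct k α β γ w 1 = β * γ - w ∧
    ∀ n : ℕ, 1 ≤ n →
      ((n : ℂ) - 1 + α) * ((n : ℂ) - 1 + β) * heunct k α β γ w (n - 1) -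
        ((n : ℂ) * (((n : ℂ) - 1 + γ) * (1 + 1 / (k : ℂ) ^ 2) + (β + 1) / (k : ℂ) ^ 2 +
              α - γ) + (β * γ - w) / (k : ℂ) ^ 2) * heunct k α β γ w n +
        ((n : ℂ) + 1) * ((n : ℂ) + γ) / (k : ℂ) ^ 2 * heunct k α β γ w (n + 1) = 0 := by
  refine ⟨heunct_zero k α β γ w,
    mul_heunct_one k w (by simpa using hβ 0) (by simpa using hγ 0), fun n hn => ?_⟩
  obtain ⟨n, rfl⟩ := Nat.exists_eq_add_of_le' hn
  simpa only [Nat.cast_add_one, add_sub_cancel_right, Nat.add_sub_cancel] using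
    heunct_add_two k w hk hα hβ hγ n

/-- The sequence `c̃_n` satisfies the three-term recurrence defining the local Heun
solution `Hℓ(1/k², -(w-βγ)/k²; α, β, γ, β+1; z)`, hence `Σ c̃_n zⁿ` is that solution. -/
theorem heun_tilde_coefficients_recurrence (k : ℝ) (hk0 : 0 < k) (hk1 : k < 1)
    (α β γ w : ℂ)
    (hα : ∀ j : ℕ, α ≠ -(j : ℂ)) (hβ : ∀ j : ℕ, β ≠ -(j : ℂ))
    (hγ : ∀ j : ℕ, γ ≠ -(j : ℂ)) :
    heunct k α β γ w 0 = 1 ∧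
    γ * heunct k α β γ w 1 = β * γ - w ∧
    ∀ n : ℕ, 1 ≤ n →
      ((n : ℂ) - 1 + α) * ((n : ℂ) - 1 + β) * heunct k α β γ w (n - 1) -
        ((n : ℂ) * (((n : ℂ) - 1 + γ) * (1 + 1 / (k : ℂ) ^ 2) + (β + 1) / (k : ℂ) ^ 2 +
              α - γ) + (β * γ - w) / (k : ℂ) ^ 2) * heunct k α β γ w n +
        ((n : ℂ) + 1) * ((n : ℂ) + γ) / (k : ℂ) ^ 2 * heunct k α β γ w (n + 1) = 0 := by
  exact heun_tilde_coefficients_recurrence_general hk0.ne' w hα hβ hγ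
end
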